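/- arXiv:0712.3847 — 2 statements merged into one kernel-verified Lean document; each statement's English description precedes it below -/
import Mathlib

section
/- For all integers n ≥ 1 and ℓ ≥ 0, the number of permutations π of {1,…,n} with L(π) ≤ ℓ equals Σ_{λ ⊢ n, λ₁ ≤ ℓ} (f^λ)². In particular, Σ_{λ ⊢ n} (f^λ)² = n!. -/
/-!
The proof is the Robinson–Schensted correspondence in the form of Fomin's growth diagrams. A
permutation matrix is placed on an `n × n` grid and a shape on every node: empty shapes on the left
and lower sides, and the others determined square by square by a local rule. Neighbouring shapes
differ by at most one cell, so a diagram can be recorded by its edge labels alone, each giving the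
row of the added cell, or `0` if nothing is added. In this language the rule `Loc` takes the labels
`(a, b)` of the edges leaving the lower left corner of a square to `(a, b)` if `a ≠ b`, to
`(a + 1, a + 1)` if `a = b ≠ 0`, and for `a = b = 0` to `(1, 1)` or `(0, 0)` according to whether
the square is marked.

* The rule is reversible, so the labels on the right and upper sides determine the marks
  (`Growth.marks_unique`), and it preserves shapes in both directions (`Loc.shape_forward`,
  `Loc.shape_backward`). The two sides therefore spell lattice words with equal content, and every
  such pair occurs (`exists_growth_of_lat`, `Growth.exists_perm`).
* Lattice words whose content is `λ` are in bijection with standard tableaux of shape `λ`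
  (`sytCount_eq`): the word lists the rows of the entries `1, …, n`.
* The first row of the shapes grows by one at a marked square and otherwise takes the maximum of the
  two neighbouring values (`Loc.first_row`). This is the recursion for the longest increasing
  subsequence inside a rectangle (`Growth.first_row`), so the shape at the corner `(n, n)` has first
  row `L(π)`.

Hence exactly `(f^λ)²` permutations have shape `λ` and they satisfy `L(π) = λ₁`
(`exists_shape`); both claims follow by summing over `λ`.
-/

open scoped BigOperators

/-- The `i`-th largest element (0-indexed) of a multiset of naturals, `0` if absent. -/
def nthPart (μ : Multiset ℕ) (i : ℕ) : ℕ :=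
  ((μ.sort (· ≤ ·)).reverse).getD i 0

/-- Cells of the Young diagram whose parts are the multiset `μ`. -/
def shapeCells (μ : Multiset ℕ) : Finset (ℕ × ℕ) :=
  (Finset.range μ.card ×ˢ Finset.range (μ.sum + 1)).filter fun c => c.2 < nthPart μ c.1

/-- Number of standard Young tableaux of shape `μ` (filled bijectively with `1,…,|μ|`,
strictly increasing along rows and down columns). -/
noncomputable def sytCount (μ : Multiset ℕ) : ℕ :=
  Set.ncard {T : ℕ × ℕ → ℕ |
    (∀ c, c ∉ shapeCells μ → T c = 0) ∧
    Set.BijOn T (shapeCells μ : Set (ℕ × ℕ)) (Set.Icc 1 μ.sum) ∧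
    (∀ i j, (i, j + 1) ∈ shapeCells μ → T (i, j) < T (i, j + 1)) ∧
    (∀ i j, (i + 1, j) ∈ shapeCells μ → T (i, j) < T (i + 1, j))}

/-- Length of the longest (strictly) increasing subsequence of a permutation of `{1,…,n}`. -/
noncomputable def permLIS (n : ℕ) (π : Equiv.Perm (Fin n)) : ℕ :=
  sSup {k : ℕ | ∃ s : Finset (Fin n), s.card = k ∧ StrictMonoOn (fun i => π i) (s : Set (Fin n))}

/-! ### The local rule and its propagation over a grid -/

/-- Fomin's local rule on one unit square of a growth diagram, written with edge labels. The label
`0` marks an edge along which the shape does not change, and a label `r ≥ 1` an edge along which a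
cell is added to the `r`-th row. The labels `a`, `b` are those of the edges leaving the lower left
corner, `a'`, `b'` those of the edges opposite to them, and `x` says whether the square is
marked. -/
def Loc (x : Prop) (a b a' b' : ℕ) : Prop :=
  (a ≠ b ∧ ¬ x ∧ a' = a ∧ b' = b) ∨ (a = b ∧ a' = b' ∧ a = a' - 1 ∧ (x ↔ a' = 1))

/-- Boundary labels and a rule for passing a square determine a labelling of the whole grid:
`H i j` labels the edge from `(i, j)` to `(i + 1, j)` and `V i j` the edge from `(i, j)` to
`(i, j + 1)`. -/
lemma exists_grid (F : ℕ → ℕ → ℕ → ℕ → ℕ × ℕ) (h0 v0 : ℕ → ℕ) :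
    ∃ H V : ℕ → ℕ → ℕ, (∀ i, H i 0 = h0 i) ∧ (∀ j, V 0 j = v0 j) ∧
      ∀ i j, H i (j + 1) = (F i j (H i j) (V i j)).1 ∧ V (i + 1) j = (F i j (H i j) (V i j)).2 := by
  let row : ℕ → (ℕ → ℕ) → ℕ → ℕ := fun i v j =>
    Nat.rec (h0 i) (fun k a => (F i k a (v k)).1) j
  let V : ℕ → ℕ → ℕ := fun i =>
    Nat.rec v0 (fun k v => fun j => (F k j (row k v j) (v j)).2) i
  exact ⟨fun i j => row i (V i) j, V, fun i => rfl, fun j => rfl, fun i j => ⟨rfl, rfl⟩⟩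

lemma grid_unique {n : ℕ} {H V H' V' : ℕ → ℕ → ℕ}
    (hdet : ∀ i < n, ∀ j < n, H i j = H' i j → V i j = V' i j →
      H i (j + 1) = H' i (j + 1) ∧ V (i + 1) j = V' (i + 1) j)
    (hH : ∀ i < n, H i 0 = H' i 0) (hV : ∀ j < n, V 0 j = V' 0 j) :
    (∀ i < n, ∀ j ≤ n, H i j = H' i j) ∧ (∀ i ≤ n, ∀ j < n, V i j = V' i j) := by
  have row : ∀ i < n, (∀ j < n, V i j = V' i j) → ∀ j ≤ n, H i j = H' i j := by
    intro i hi hv j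
    induction j with
    | zero => intro _; exact hH i hi
    | succ j ih => intro hj; exact (hdet i hi j (by omega) (ih (by omega)) (hv j (by omega))).1
  have hv : ∀ i ≤ n, ∀ j < n, V i j = V' i j := by
    intro i
    induction i with
    | zero => intro _; exact hV
    | succ i ih =>
      intro hi j hj
      have h1 := ih (by omega)
      exact (hdet i (by omega) j hj (row i (by omega) h1 j (by omega)) (h1 j hj)).2
  exact ⟨fun i hi => row i hi (hv i (by omega)), hv⟩

/-- A growth diagram on the `n × n` grid with marked squares `X`, empty shapes on the left and
lower sides, horizontal edge labels `H` and vertical edge labels `V`. -/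
structure Growth (n : ℕ) (X : ℕ → ℕ → Prop) (H V : ℕ → ℕ → ℕ) : Prop where
  loc : ∀ i < n, ∀ j < n, Loc (X i j) (H i j) (V i j) (H i (j + 1)) (V (i + 1) j)
  H0 : ∀ i < n, H i 0 = 0
  V0 : ∀ j < n, V 0 j = 0

/-- The marks determine the labels. -/
lemma Growth.unique {n : ℕ} {X : ℕ → ℕ → Prop} {H V H' V' : ℕ → ℕ → ℕ}
    (g : Growth n X H V) (g' : Growth n X H' V') :
    (∀ i < n, ∀ j ≤ n, H i j = H' i j) ∧ (∀ i ≤ n, ∀ j < n, V i j = V' i j) := by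
  apply grid_unique
  · intro i hi j hj h1 h2
    have l := g.loc i hi j hj
    have l' := g'.loc i hi j hj
    rw [← h1, ← h2] at l'
    unfold Loc at l l'
    by_cases hx : X i j <;> simp only [hx, not_true_eq_false, not_false_eq_true, true_iff,
      false_iff, true_and, false_and, and_false, false_or] at l l' <;> omega
  · intro i hi; rw [g.H0 i hi, g'.H0 i hi]
  · intro j hj; rw [g.V0 j hj, g'.V0 j hj]

/-- The labels on the right and upper sides determine the marks: the local rule can be run
backwards, and `grid_unique` applies to the diagram rotated by a half turn. -/
lemma Growth.marks_unique {n : ℕ} {X X' : ℕ → ℕ → Prop} {H V H' V' : ℕ → ℕ → ℕ}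
    (g : Growth n X H V) (g' : Growth n X' H' V')
    (hH : ∀ i < n, H i n = H' i n) (hV : ∀ j < n, V n j = V' n j) :
    ∀ i < n, ∀ j < n, (X i j ↔ X' i j) := by
  have key := grid_unique (n := n) (H := fun i j => H (n - 1 - i) (n - j))
    (V := fun i j => V (n - i) (n - 1 - j)) (H' := fun i j => H' (n - 1 - i) (n - j))
    (V' := fun i j => V' (n - i) (n - 1 - j)) ?_ ?_ ?_
  · intro i hi j hj
    have h1 := key.1 (n - 1 - i) (by omega) (n - (j + 1)) (by omega)
    have h2 := key.2 (n - (i + 1)) (by omega) (n - 1 - j) (by omega)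
    simp only [show n - 1 - (n - 1 - i) = i by omega, show n - (n - (j + 1)) = j + 1 by omega,
      show n - (n - (i + 1)) = i + 1 by omega, show n - 1 - (n - 1 - j) = j by omega] at h1 h2
    have l := g.loc i hi j hj
    have l' := g'.loc i hi j hj
    rw [← h1, ← h2] at l'
    unfold Loc at l l'
    by_cases hx : X i j <;> by_cases hx' : X' i j <;>
      simp only [hx, hx', not_true_eq_false, not_false_eq_true, true_iff,
      false_iff, true_and, false_and, and_false, false_or] at l l' ⊢ <;> omega
  · intro i hi j hj h1 h2
    have l := g.loc (n - 1 - i) (by omega) (n - 1 - j) (by omega)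
    have l' := g'.loc (n - 1 - i) (by omega) (n - 1 - j) (by omega)
    simp only [show n - 1 - i + 1 = n - i by omega, show n - 1 - j + 1 = n - j by omega] at l l'
    simp only [show n - (j + 1) = n - 1 - j by omega, show n - (i + 1) = n - 1 - i by omega]
    rw [← h1, ← h2] at l'
    unfold Loc at l l'
    omega
  · intro i hi; exact hH _ (by omega)
  · intro j hj; exact hV _ (by omega)

/-- A growth diagram exists whenever every row and column has at most one mark. The labels `H i j`
and `V i j` are then nonzero exactly beyond the mark of their row or column, so the labels next to
a marked square vanish, as the local rule requires. -/
lemma exists_growth (n : ℕ) (X : ℕ → ℕ → Prop) (hr : ∀ i j j', X i j → X i j' → j = j')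
    (hc : ∀ i i' j, X i j → X i' j → i = i') :
    ∃ H V, Growth n X H V ∧ (∀ i j, H i j ≠ 0 ↔ ∃ j' < j, X i j') ∧
      (∀ i j, V i j ≠ 0 ↔ ∃ i' < i, X i' j) := by
  classical
  obtain ⟨H, V, hH, hV, hF⟩ := exists_grid (fun i j a b => if a = b then
    (if a = 0 then (if X i j then (1, 1) else (0, 0)) else (a + 1, a + 1)) else (a, b))
    (fun _ => 0) (fun _ => 0)
  have hmark : ∀ i j, (H i j ≠ 0 ↔ ∃ j' < j, X i j') → (V i j ≠ 0 ↔ ∃ i' < i, X i' j) →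
      X i j → H i j = 0 ∧ V i j = 0 := by
    intro i j h1 h2 hx
    constructor
    · by_contra h
      obtain ⟨j', hj', hx'⟩ := h1.1 h
      have := hr i j j' hx hx'
      omega
    · by_contra h
      obtain ⟨i', hi', hx'⟩ := h2.1 h
      have := hc i i' j hx hx'
      omega
  have hstep : ∀ i j, (H i j ≠ 0 ↔ ∃ j' < j, X i j') → (V i j ≠ 0 ↔ ∃ i' < i, X i' j) →
      (H i (j + 1) ≠ 0 ↔ ∃ j' < j + 1, X i j') ∧ (V (i + 1) j ≠ 0 ↔ ∃ i' < i + 1, X i' j) := by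
    intro i j h1 h2
    simp only [Nat.exists_lt_succ_right, ← h1, ← h2, (hF i j).1, (hF i j).2]
    by_cases hx : X i j
    · obtain ⟨ha, hb⟩ := hmark i j h1 h2 hx
      simp [ha, hb, hx]
    · simp only [hx, if_false, or_false]
      split_ifs with h3 h4 <;> simp <;> omega
  have hrow : ∀ i, (∀ j, V i j ≠ 0 ↔ ∃ i' < i, X i' j) → ∀ j, H i j ≠ 0 ↔ ∃ j' < j, X i j' := by
    intro i hv j
    induction j with
    | zero => simp [hH]
    | succ j ih => exact (hstep i j ih (hv j)).1
  have hVall : ∀ i j, V i j ≠ 0 ↔ ∃ i' < i, X i' j := by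
    intro i
    induction i with
    | zero => simp [hV]
    | succ i ih => intro j; exact (hstep i j (hrow i ih j) (ih j)).2
  have hHall := fun i => hrow i (hVall i)
  refine ⟨H, V, ⟨?_, fun i _ => hH i, fun j _ => hV j⟩, hHall, hVall⟩
  intro i _ j _
  rw [(hF i j).1, (hF i j).2]
  unfold Loc
  by_cases hx : X i j
  · obtain ⟨ha, hb⟩ := hmark i j (hHall i j) (hVall i j) hx
    simp [ha, hb, hx]
  · simp only [hx, if_false, false_iff]
    split_ifs with h3 h4 <;> simp <;> omega

/-! ### The shapes at the nodes -/

/-- The row lengths `f 1, f 2, …` are nonnegative and weakly decreasing; the value `f 0` carries no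
information, since rows are indexed from `1`. -/
def IsShape (f : ℕ → ℤ) : Prop := ∀ r, 1 ≤ r → 0 ≤ f r ∧ f (r + 1) ≤ f r

/-- `g` is obtained from `f` by following an edge with label `a`. -/
def Step (f g : ℕ → ℤ) (a : ℕ) : Prop := ∀ r, 1 ≤ r → g r = f r + if a = r then 1 else 0

lemma Loc.shape_forward {x : Prop} {a b a' b' : ℕ} (h : Loc x a b a' b') {f m p g : ℕ → ℤ}
    (h1 : Step f m a) (h2 : Step f p b) (h3 : Step m g b')
    (hf : IsShape f) (hm : IsShape m) (hp : IsShape p) : IsShape g := by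
  intro r hr
  have e1 := h1 r hr; have e2 := h2 r hr; have e3 := h3 r hr
  have d1 := h1 (r + 1) (by omega); have d2 := h2 (r + 1) (by omega)
  have d3 := h3 (r + 1) (by omega)
  have sf := hf r hr; have sm := hm r hr; have sp := hp r hr
  unfold Loc at h
  constructor
  · split_ifs at e1 e2 e3 <;> omega
  · rcases h with ⟨h4, -, rfl, rfl⟩ | ⟨rfl, rfl, h5, -⟩
    · split_ifs at * <;> omega
    · split_ifs at * <;> omega

lemma Loc.shape_backward {x : Prop} {a b a' b' : ℕ} (h : Loc x a b a' b') {f m p g : ℕ → ℤ}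
    (h1 : Step f m a) (h2 : Step f p b) (h3 : Step m g b')
    (hm : IsShape m) (hp : IsShape p) (hg : IsShape g) : IsShape f := by
  intro r hr
  have e1 := h1 r hr; have e2 := h2 r hr; have e3 := h3 r hr
  have d1 := h1 (r + 1) (by omega); have d2 := h2 (r + 1) (by omega)
  have d3 := h3 (r + 1) (by omega)
  have sg := hg r hr; have sm := hm r hr; have sp := hp r hr
  have tm := hm (r + 1) (by omega); have tp := hp (r + 1) (by omega)
  unfold Loc at h
  rcases h with ⟨h4, -, rfl, rfl⟩ | ⟨rfl, rfl, h5, -⟩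
  · split_ifs at * <;> omega
  · split_ifs at * <;> omega

/-- The number of letters `r` among the first `m` letters of `w`. -/
def cnt (w : ℕ → ℕ) (r m : ℕ) : ℕ := Nat.count (fun k => w k = r) m

@[simp] lemma cnt_zero (w : ℕ → ℕ) (r : ℕ) : cnt w r 0 = 0 := by simp [cnt]

lemma cnt_succ (w : ℕ → ℕ) (r m : ℕ) :
    cnt w r (m + 1) = cnt w r m + if w m = r then 1 else 0 := by
  simp [cnt, Nat.count_succ]

lemma cnt_mono (w : ℕ → ℕ) (r : ℕ) {m m' : ℕ} (h : m ≤ m') : cnt w r m ≤ cnt w r m' :=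
  Nat.count_monotone _ h

lemma cnt_congr {w w' : ℕ → ℕ} {n : ℕ} (h : ∀ k < n, w k = w' k) (r : ℕ) {m : ℕ} (hm : m ≤ n) :
    cnt w r m = cnt w' r m := by
  induction m with
  | zero => simp
  | succ m ih => rw [cnt_succ, cnt_succ, ih (by omega), h m (by omega)]

/-- The shape at a node may be read off along either of two paths to the origin. -/
lemma Growth.cnt_eq {n : ℕ} {X : ℕ → ℕ → Prop} {H V : ℕ → ℕ → ℕ} (g : Growth n X H V)
    {r : ℕ} (hr : 1 ≤ r) : ∀ i ≤ n, ∀ j ≤ n, cnt (fun k => H k j) r i = cnt (V i) r j := by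
  have row : ∀ i < n, ∀ j ≤ n, cnt (V (i + 1)) r j = cnt (V i) r j + if H i j = r then 1 else 0 := by
    intro i hi j
    induction j with
    | zero => intro _; rw [g.H0 i hi]; simp; omega
    | succ j ih =>
      intro hj
      rw [cnt_succ, cnt_succ, ih (by omega)]
      have l := g.loc i hi j (by omega)
      unfold Loc at l
      rcases l with ⟨-, -, h1, h2⟩ | ⟨h1, h2, -, -⟩
      · rw [h1, h2]; omega
      · rw [h1, h2]
  intro i
  induction i with
  | zero =>
    intro _ j hj
    rw [cnt_congr (w' := fun _ => 0) (fun k hk => g.V0 k hk) r hj]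
    induction j with
    | zero => simp
    | succ j ih => rw [cnt_succ, ← ih (by omega)]; simp; omega
  | succ i ih =>
    intro hi j hj
    rw [cnt_succ, row i (by omega) j hj, ih (by omega) j hj]

/-- The shape at the node `(i, j)`. -/
def nodeShape (H : ℕ → ℕ → ℕ) (i j r : ℕ) : ℤ := cnt (fun k => H k j) r i

lemma nodeShape_stepH (H : ℕ → ℕ → ℕ) (i j : ℕ) :
    Step (nodeShape H i j) (nodeShape H (i + 1) j) (H i j) := by
  intro r _
  simp [nodeShape, cnt_succ]

lemma Growth.nodeShape_stepV {n : ℕ} {X : ℕ → ℕ → Prop} {H V : ℕ → ℕ → ℕ} (g : Growth n X H V)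
    {i j : ℕ} (hi : i ≤ n) (hj : j < n) :
    Step (nodeShape H i j) (nodeShape H i (j + 1)) (V i j) := by
  intro r hr
  simp [nodeShape, g.cnt_eq hr i hi j hj.le, g.cnt_eq hr i hi (j + 1) hj, cnt_succ]

/-- A property of nodes that holds on the left and lower sides, and at the upper right corner of a
square whenever it holds at the other three corners, holds everywhere. -/
lemma grid_induction {n : ℕ} {P : ℕ → ℕ → Prop} (h0 : ∀ j ≤ n, P 0 j) (h1 : ∀ i ≤ n, P i 0)
    (hs : ∀ i < n, ∀ j < n, P i j → P (i + 1) j → P i (j + 1) → P (i + 1) (j + 1)) :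
    ∀ i ≤ n, ∀ j ≤ n, P i j := by
  intro i
  induction i with
  | zero => intro _; exact h0
  | succ i ih =>
    intro hi j
    induction j with
    | zero => intro _; exact h1 _ hi
    | succ j ihj =>
      intro hj
      exact hs i (by omega) j (by omega) (ih (by omega) j (by omega)) (ihj (by omega))
        (ih (by omega) (j + 1) hj)

lemma Growth.nodeShape_bottom {n : ℕ} {X : ℕ → ℕ → Prop} {H V : ℕ → ℕ → ℕ} (g : Growth n X H V)
    {r i : ℕ} (hr : 1 ≤ r) (hi : i ≤ n) : nodeShape H i 0 r = 0 := by
  simp [nodeShape, g.cnt_eq hr i hi 0 (Nat.zero_le n)]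

lemma Growth.isShape {n : ℕ} {X : ℕ → ℕ → Prop} {H V : ℕ → ℕ → ℕ} (g : Growth n X H V) :
    ∀ i ≤ n, ∀ j ≤ n, IsShape (nodeShape H i j) := by
  apply grid_induction
  · intro j _ r _; simp [nodeShape]
  · intro i hi r hr
    simp [g.nodeShape_bottom hr hi, g.nodeShape_bottom (r := r + 1) (by omega) hi]
  · intro i hi j hj hf hm hp
    exact (g.loc i hi j hj).shape_forward (nodeShape_stepH H i j) (g.nodeShape_stepV hi.le hj)
      (g.nodeShape_stepV hi hj) hf hm hp

/-! ### Lattice words and the inverse construction -/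

/-- Lattice words (Yamanouchi words) of length `n` whose letter `r` occurs `c (r - 1)` times, padded
by `0`: every initial part has at least as many letters `r` as letters `r + 1`. They encode the chains of
shapes that grow by one cell at a time, the letter being the row of the new cell. -/
structure IsLat (n : ℕ) (c : ℕ → ℕ) (w : ℕ → ℕ) : Prop where
  zero : ∀ k, n ≤ k → w k = 0
  pos : ∀ k < n, w k ≠ 0
  lat : ∀ m ≤ n, ∀ r, 1 ≤ r → cnt w (r + 1) m ≤ cnt w r m
  content : ∀ r, cnt w (r + 1) n = c r

/-- Every pair of lattice words of the same content labels the right and upper sides of a growth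
diagram, obtained by running the local rule backwards. That the shapes on the left and lower sides
are empty follows by comparing sizes, once all the integer vectors at the nodes are known to be
shapes. -/
lemma exists_growth_of_lat {n : ℕ} {c h v : ℕ → ℕ} (hh : IsLat n c h) (hv : IsLat n c v) :
    ∃ X H V, Growth n X H V ∧ (∀ i < n, H i n = h i) ∧ (∀ j < n, V n j = v j) := by
  obtain ⟨A, B, hA, hB, hF⟩ := exists_grid (fun _ _ a b => if a = b then (a - 1, b - 1) else (a, b))
    (fun i => h (n - 1 - i)) (fun j => v (n - 1 - j))
  -- the labels of the unrotated diagram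
  set H : ℕ → ℕ → ℕ := fun i j => A (n - 1 - i) (n - j) with hHdef
  set V : ℕ → ℕ → ℕ := fun i j => B (n - i) (n - 1 - j) with hVdef
  have hHn : ∀ i < n, H i n = h i := by
    intro i hi
    simp only [hHdef, Nat.sub_self, hA]
    congr 1; omega
  have hVn : ∀ j < n, V n j = v j := by
    intro j hj
    simp only [hVdef, Nat.sub_self, hB]
    congr 1; omega
  have hloc : ∀ i < n, ∀ j < n,
      Loc (H i (j + 1) = 1 ∧ V (i + 1) j = 1) (H i j) (V i j) (H i (j + 1)) (V (i + 1) j) := by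
    intro i hi j hj
    have := hF (n - 1 - i) (n - 1 - j)
    have e1 : H i (j + 1) = A (n - 1 - i) (n - 1 - j) := by simp only [hHdef]; congr 1; omega
    have e2 : V (i + 1) j = B (n - 1 - i) (n - 1 - j) := by simp only [hVdef]; congr 1; omega
    have e3 : H i j = A (n - 1 - i) (n - 1 - j + 1) := by simp only [hHdef]; congr 1; omega
    have e4 : V i j = B (n - 1 - i + 1) (n - 1 - j) := by simp only [hVdef]; congr 1; omega
    rw [← e1, ← e2, ← e3, ← e4] at this
    obtain ⟨t1, t2⟩ := this
    unfold Loc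
    split_ifs at t1 t2 <;> simp only at t1 t2 <;> omega
  -- the shape at `(i, j)`, computed by walking left from the node `(n, j)` of the right side
  set s : ℕ → ℕ → ℕ → ℤ := fun i j r =>
    (cnt v r j : ℤ) - cnt (fun k => H k j) r n + cnt (fun k => H k j) r i with hs
  have stepH : ∀ i j, Step (s i j) (s (i + 1) j) (H i j) := by
    intro i j r _
    simp only [hs, cnt_succ]
    push_cast; ring
  have stepV : ∀ d ≤ n, ∀ j < n, Step (s (n - d) j) (s (n - d) (j + 1)) (V (n - d) j) := by
    intro d
    induction d with
    | zero =>
      intro _ j hj r hr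
      simp only [hs, Nat.sub_zero, cnt_succ, hVn j hj]
      push_cast; ring
    | succ d ih =>
      intro hd j hj r hr
      have h1 := ih (by omega) j hj r hr
      have e : n - d = n - (d + 1) + 1 := by omega
      rw [e] at h1
      have h2 := stepH (n - (d + 1)) j r hr
      have h3 := stepH (n - (d + 1)) (j + 1) r hr
      have l := hloc (n - (d + 1)) (by omega) j hj
      unfold Loc at l
      rcases l with ⟨-, -, h4, h5⟩ | ⟨h4, h5, -, -⟩
      · rw [h4] at h3; rw [h5] at h1; linarith
      · rw [h4] at h2; rw [h5] at h3; linarith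
  have stepV' : ∀ i ≤ n, ∀ j < n, Step (s i j) (s i (j + 1)) (V i j) := by
    intro i hi
    have := stepV (n - i) (by omega)
    rwa [show n - (n - i) = i by omega] at this
  have content : ∀ r, 1 ≤ r → cnt v r n = cnt h r n := by
    intro r hr
    obtain ⟨r, rfl⟩ := Nat.exists_eq_add_of_le' hr
    rw [hv.content, hh.content]
  have top : ∀ i ≤ n, ∀ r, 1 ≤ r → s i n r = cnt h r i := by
    intro i hi r hr
    simp only [hs]
    rw [cnt_congr hHn r le_rfl, cnt_congr hHn r hi, content r hr]
    ring
  have right : ∀ j r, s n j r = cnt v r j := by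
    intro j r; simp [hs]
  have shape : ∀ i ≤ n, ∀ j ≤ n, IsShape (s (n - i) (n - j)) := by
    apply grid_induction
    · intro j _ r hr
      rw [Nat.sub_zero, right, right]
      exact ⟨by positivity, by exact_mod_cast hv.lat _ (by omega) r hr⟩
    · intro i _ r hr
      rw [Nat.sub_zero, top _ (by omega) r hr, top _ (by omega) (r + 1) (by omega)]
      exact ⟨by positivity, by exact_mod_cast hh.lat _ (by omega) r hr⟩
    · intro i hi j hj hg hm hp
      have ei : n - i = n - (i + 1) + 1 := by omega
      have ej : n - j = n - (j + 1) + 1 := by omega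
      rw [ei] at hg hp
      rw [ej] at hg hm
      exact (hloc _ (by omega) _ (by omega)).shape_backward (stepH _ _)
        (stepV' _ (by omega) _ (by omega)) (stepV' _ (by omega) _ (by omega)) hp hm hg
  have shape' : ∀ i ≤ n, ∀ j ≤ n, IsShape (s i j) := by
    intro i hi j hj
    have := shape (n - i) (by omega) (n - j) (by omega)
    rwa [show n - (n - i) = i by omega, show n - (n - j) = j by omega] at this
  refine ⟨_, H, V, ⟨hloc, ?_, ?_⟩, hHn, hVn⟩
  · -- on the lower side the shapes increase, are nonnegative and end with the empty shape
    have hz : ∀ i ≤ n, ∀ r, 1 ≤ r → s i 0 r = 0 := by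
      intro i hi r hr
      have h1 := (shape' i hi 0 (Nat.zero_le n) r hr).1
      have h2 := cnt_mono (fun k => H k 0) r hi
      simp only [hs, cnt_zero] at h1 ⊢
      omega
    intro i hi
    by_contra hne
    have := stepH i 0 (H i 0) (by omega)
    rw [hz i hi.le _ (by omega), hz (i + 1) hi _ (by omega)] at this
    simp at this
  · -- on the left side they increase as well, and end with the empty shape at `(0, n)`
    have hle : ∀ d ≤ n, ∀ r, 1 ≤ r → s 0 (n - d) r ≤ 0 := by
      intro d
      induction d with
      | zero => intro _ r hr; rw [Nat.sub_zero, top 0 (Nat.zero_le n) r hr]; simp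
      | succ d ih =>
        intro hd r hr
        have h1 := ih (by omega) r hr
        have h2 := stepV' 0 (Nat.zero_le n) (n - (d + 1)) (by omega) r hr
        rw [show n - (d + 1) + 1 = n - d by omega] at h2
        split_ifs at h2 <;> omega
    have hz : ∀ j ≤ n, ∀ r, 1 ≤ r → s 0 j r = 0 := by
      intro j hj r hr
      have h1 := (shape' 0 (Nat.zero_le n) j hj r hr).1
      have h2 := hle (n - j) (by omega) r hr
      rw [show n - (n - j) = j by omega] at h2
      omega
    intro j hj
    by_contra hne
    have := stepV' 0 (Nat.zero_le n) j hj (V 0 j) (by omega)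
    rw [hz j hj.le _ (by omega), hz (j + 1) hj _ (by omega)] at this
    simp at this

/-! ### Permutations and their longest increasing subsequences -/

/-- The permutation matrix of `π`, as a set of marked squares. -/
def permMarks {n : ℕ} (π : Equiv.Perm (Fin n)) (i j : ℕ) : Prop :=
  ∃ h : i < n, (π ⟨i, h⟩ : ℕ) = j

lemma permMarks_row {n : ℕ} (π : Equiv.Perm (Fin n)) (i j j' : ℕ) (h : permMarks π i j)
    (h' : permMarks π i j') : j = j' := by
  obtain ⟨_, rfl⟩ := h
  obtain ⟨_, rfl⟩ := h'
  rfl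

lemma permMarks_col {n : ℕ} (π : Equiv.Perm (Fin n)) (i i' j : ℕ) (h : permMarks π i j)
    (h' : permMarks π i' j) : i = i' := by
  obtain ⟨_, h⟩ := h
  obtain ⟨_, h'⟩ := h'
  simpa using π.injective (Fin.ext (h.trans h'.symm))

/-- The marks of a growth diagram with nonzero labels on the upper side form a permutation
matrix: for fixed `i` the label `H i j` changes from zero to nonzero exactly at a mark and never
returns to zero, and similarly for `V i j` with fixed `j`. -/
lemma Growth.exists_perm {n : ℕ} {X : ℕ → ℕ → Prop} {H V : ℕ → ℕ → ℕ} (g : Growth n X H V)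
    (hH : ∀ i < n, H i n ≠ 0) :
    ∃ π : Equiv.Perm (Fin n), ∀ i < n, ∀ j < n, (X i j ↔ permMarks π i j) := by
  have start : ∀ i < n, ∀ j < n, X i j → H i j = 0 ∧ V i j = 0 ∧ H i (j + 1) ≠ 0 ∧
      V (i + 1) j ≠ 0 := by
    intro i hi j hj hx
    have l := g.loc i hi j hj
    unfold Loc at l
    simp only [hx, true_iff, not_true_eq_false, false_and, and_false, false_or] at l
    omega
  have keep : ∀ i < n, ∀ j < n, (H i j ≠ 0 → H i (j + 1) ≠ 0) ∧ (V i j ≠ 0 → V (i + 1) j ≠ 0) := by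
    intro i hi j hj
    have l := g.loc i hi j hj
    unfold Loc at l
    rcases l with l | ⟨l1, l2, l3, -⟩ <;> constructor <;> intro h <;> omega
  have keepV : ∀ j < n, ∀ i i', i ≤ i' → i' ≤ n → V i j ≠ 0 → V i' j ≠ 0 := by
    intro j hj i i' hii'
    induction i', hii' using Nat.le_induction with
    | base => exact fun _ h => h
    | succ i' hi' ih => exact fun h1 h2 => (keep i' (by omega) j hj).2 (ih (by omega) h2)
  have keepH : ∀ i < n, ∀ j j', j ≤ j' → j' ≤ n → H i j ≠ 0 → H i j' ≠ 0 := by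
    intro i hi j j' hjj'
    induction j', hjj' using Nat.le_induction with
    | base => exact fun _ h => h
    | succ j' hj' ih => exact fun h1 h2 => (keep i hi j' (by omega)).1 (ih (by omega) h2)
  have ex : ∀ i < n, ∃ j < n, X i j := by
    intro i hi
    by_contra! hno
    have hz : ∀ j ≤ n, H i j = 0 := by
      intro j
      induction j with
      | zero => intro _; exact g.H0 i hi
      | succ j ih =>
        intro hj
        have l := g.loc i hi j hj
        have h1 := ih (by omega)
        have h2 := hno j hj
        unfold Loc at l
        simp only [h2, false_iff] at l
        omega
    exact hH i hi (hz n le_rfl)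
  have row : ∀ i < n, ∀ j < n, ∀ j' < n, X i j → X i j' → ¬ j < j' := by
    intro i hi j hj j' hj' hx hx' hlt
    exact keepH i hi (j + 1) j' hlt hj'.le (start i hi j hj hx).2.2.1 (start i hi j' hj' hx').1
  have col : ∀ j < n, ∀ i < n, ∀ i' < n, X i j → X i' j → ¬ i < i' := by
    intro j hj i hi i' hi' hx hx' hlt
    exact keepV j hj (i + 1) i' hlt hi'.le (start i hi j hj hx).2.2.2 (start i' hi' j hj hx').2.1
  choose p hp hX using fun i : Fin n => ex i i.2
  have inj : Function.Injective fun i : Fin n => (⟨p i, hp i⟩ : Fin n) := by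
    intro i i' h
    have h1 : p i = p i' := congrArg Fin.val h
    have h2 := hX i'
    rw [← h1] at h2
    have h3 := col (p i) (hp i) i i.2 i' i'.2 (hX i) h2
    have h4 := col (p i) (hp i) i' i'.2 i i.2 h2 (hX i)
    exact Fin.ext (by omega)
  refine ⟨Equiv.ofBijective _ (Finite.injective_iff_bijective.1 inj), fun i hi j hj => ?_⟩
  constructor
  · intro hx
    refine ⟨hi, ?_⟩
    have h1 := row i hi j hj _ (hp ⟨i, hi⟩) hx (hX ⟨i, hi⟩)
    have h2 := row i hi _ (hp ⟨i, hi⟩) j hj (hX ⟨i, hi⟩) hx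
    simp only [Equiv.ofBijective_apply]
    omega
  · rintro ⟨_, rfl⟩
    exact hX ⟨i, hi⟩

/-- `S` is an increasing subsequence of `π` inside the rectangle `[0, i) × [0, j)`. -/
def IncIn {n : ℕ} (π : Equiv.Perm (Fin n)) (i j : ℕ) (S : Finset (Fin n)) : Prop :=
  StrictMonoOn (fun k => π k) (S : Set (Fin n)) ∧ ∀ k ∈ S, (k : ℕ) < i ∧ (π k : ℕ) < j

/-- The local rule says that the first row grows by one at a marked square, and otherwise takes the
maximum of the two neighbouring values. -/
lemma Loc.first_row {x : Prop} {a b a' b' : ℕ} (h : Loc x a b a' b') {f m p g : ℕ → ℤ}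
    (h1 : Step f m a) (h2 : Step f p b) (h3 : Step m g b') :
    (x → g 1 = f 1 + 1) ∧ (¬ x → g 1 = max (m 1) (p 1)) := by
  have e1 := h1 1 le_rfl
  have e2 := h2 1 le_rfl
  have e3 := h3 1 le_rfl
  unfold Loc at h
  by_cases hx : x
  · simp only [hx, true_iff, not_true_eq_false, false_and, and_false, false_or] at h
    refine ⟨fun _ => ?_, fun h => absurd hx h⟩
    split_ifs at e1 e2 e3 <;> omega
  · simp only [hx, false_iff] at h
    refine ⟨fun h => absurd h hx, fun _ => ?_⟩
    rcases max_cases (m 1) (p 1) with hmax | hmax <;> rw [hmax.1] <;>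
      rcases h with ⟨h4, -, rfl, rfl⟩ | ⟨rfl, rfl, h5, h6⟩ <;>
      split_ifs at e1 e2 e3 <;> omega

/-- The first row of the shape at a node is the length of the longest increasing subsequence in the
rectangle below that node. -/
lemma Growth.first_row {n : ℕ} {π : Equiv.Perm (Fin n)} {H V : ℕ → ℕ → ℕ}
    (g : Growth n (permMarks π) H V) : ∀ i ≤ n, ∀ j ≤ n,
      (∀ S, IncIn π i j S → (S.card : ℤ) ≤ nodeShape H i j 1) ∧
      ∃ S, IncIn π i j S ∧ (S.card : ℤ) = nodeShape H i j 1 := by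
  apply grid_induction
  · intro j _
    have h0 : nodeShape H 0 j 1 = 0 := by simp [nodeShape]
    rw [h0]
    refine ⟨fun S hS => ?_, ∅, by simp [IncIn, StrictMonoOn], by simp⟩
    rw [Finset.eq_empty_of_forall_notMem (s := S) fun k hk => absurd (hS.2 k hk).1 (by omega)]
    simp
  · intro i hi
    rw [g.nodeShape_bottom le_rfl hi]
    refine ⟨fun S hS => ?_, ∅, by simp [IncIn, StrictMonoOn], by simp⟩
    rw [Finset.eq_empty_of_forall_notMem (s := S) fun k hk => absurd (hS.2 k hk).2 (by omega)]
    simp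
  · rintro i hi j hj ⟨uf, Sf, hSf, cf⟩ ⟨um, Sm, hSm, cm⟩ ⟨up, Sp, hSp, cp⟩
    have hrule := (g.loc i hi j hj).first_row (nodeShape_stepH H i j)
      (g.nodeShape_stepV hi.le hj) (g.nodeShape_stepV hi hj)
    by_cases hx : permMarks π i j
    · rw [hrule.1 hx]
      obtain ⟨_, hπ⟩ := hx
      constructor
      · intro S hS
        have h1 : IncIn π i j (S.erase ⟨i, hi⟩) := by
          refine ⟨hS.1.mono (by simp), fun k hk => ?_⟩
          obtain ⟨hne, hk⟩ := Finset.mem_erase.1 hk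
          have h2 := hS.2 k hk
          have h3 : (k : ℕ) ≠ i := fun h => hne (Fin.ext h)
          have h4 : (π k : ℕ) ≠ j := fun h => hne (π.injective (Fin.ext (h.trans hπ.symm)))
          omega
        have h2 := uf _ h1
        have h3 := Finset.pred_card_le_card_erase (s := S) (a := ⟨i, hi⟩)
        omega
      · have hnot : (⟨i, hi⟩ : Fin n) ∉ Sf := fun h => absurd (hSf.2 _ h).1 (by simp)
        refine ⟨insert ⟨i, hi⟩ Sf, ⟨?_, ?_⟩, ?_⟩
        · intro a ha b hb hab
          simp only [Finset.coe_insert, Set.mem_insert_iff, Finset.mem_coe] at ha hb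
          rcases ha with rfl | ha <;> rcases hb with rfl | hb
          · exact absurd hab (lt_irrefl _)
          · have := (hSf.2 b hb).1
            simp only [Fin.lt_def] at hab
            omega
          · have := (hSf.2 a ha).2
            simp only [Fin.lt_def]
            omega
          · exact hSf.1 ha hb hab
        · intro k hk
          rcases Finset.mem_insert.1 hk with rfl | hk
          · simp only; omega
          · have := hSf.2 k hk
            omega
        · rw [Finset.card_insert_of_notMem hnot]
          push_cast
          omega
    · rw [hrule.2 hx]
      constructor
      · intro S hS
        by_cases hmem : (⟨i, hi⟩ : Fin n) ∈ S
        · -- the last entry is at position `i` and has value below `j`, and bounds the others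
          refine le_max_of_le_left (um S ⟨hS.1, fun k hk => ⟨(hS.2 k hk).1, ?_⟩⟩)
          have h1 := (hS.2 _ hmem).2
          have h2 : (π ⟨i, hi⟩ : ℕ) ≠ j := fun h => hx ⟨hi, h⟩
          have h3 : k ≤ ⟨i, hi⟩ := by
            have := (hS.2 k hk).1
            simp only [Fin.le_def]
            omega
          have h4 := hS.1.monotoneOn hk hmem h3
          simp only [Fin.le_def] at h4
          omega
        · refine le_max_of_le_right (up S ⟨hS.1, fun k hk => ⟨?_, (hS.2 k hk).2⟩⟩)
          have h1 := (hS.2 k hk).1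
          have h2 : (k : ℕ) ≠ i := fun h => hmem (by rwa [show (⟨i, hi⟩ : Fin n) = k from
            Fin.ext h.symm])
          omega
      · rcases max_cases (nodeShape H (i + 1) j 1) (nodeShape H i (j + 1) 1) with h | h
        · exact ⟨Sm, ⟨hSm.1, fun k hk => by have := hSm.2 k hk; omega⟩, by rw [h.1, cm]⟩
        · exact ⟨Sp, ⟨hSp.1, fun k hk => by have := hSp.2 k hk; omega⟩, by rw [h.1, cp]⟩

lemma Growth.permLIS_eq {n : ℕ} {π : Equiv.Perm (Fin n)} {H V : ℕ → ℕ → ℕ}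
    (g : Growth n (permMarks π) H V) : permLIS n π = cnt (V n) 1 n := by
  obtain ⟨h1, S, h2, h3⟩ := g.first_row n le_rfl n le_rfl
  have e : nodeShape H n n 1 = cnt (V n) 1 n := by
    simp [nodeShape, g.cnt_eq le_rfl n le_rfl n le_rfl]
  rw [e] at h1 h3
  refine IsGreatest.csSup_eq ⟨⟨S, by exact_mod_cast h3, h2.1⟩, ?_⟩
  rintro k ⟨T, rfl, hT⟩
  exact_mod_cast h1 T ⟨hT, fun k _ => ⟨k.2, (π k).2⟩⟩

/-! ### Partitions as row-length functions -/

lemma nthPart_anti (μ : Multiset ℕ) (i : ℕ) : nthPart μ (i + 1) ≤ nthPart μ i := by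
  have hp : ((μ.sort (· ≤ ·)).reverse).Pairwise (· ≥ ·) := by
    rw [List.pairwise_reverse]
    exact μ.pairwise_sort (· ≤ ·)
  unfold nthPart
  rw [List.getD_eq_getElem?_getD, List.getD_eq_getElem?_getD]
  by_cases h : i + 1 < ((μ.sort (· ≤ ·)).reverse).length
  · rw [List.getElem?_eq_getElem h, List.getElem?_eq_getElem (by omega)]
    exact List.pairwise_iff_getElem.1 hp i (i + 1) (by omega) h (by omega)
  · rw [List.getElem?_eq_none (by omega)]
    simp

lemma nthPart_le_sum (μ : Multiset ℕ) (i : ℕ) : nthPart μ i ≤ μ.sum := by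
  unfold nthPart
  by_cases h : i < ((μ.sort (· ≤ ·)).reverse).length
  · rw [List.getD_eq_getElem _ _ h]
    refine Multiset.le_sum_of_mem ?_
    have := List.getElem_mem h
    rwa [List.mem_reverse, Multiset.mem_sort] at this
  · rw [List.getD_eq_default _ _ (by omega)]
    exact Nat.zero_le _

lemma lt_card_of_nthPart {μ : Multiset ℕ} {i : ℕ} (h : nthPart μ i ≠ 0) : i < μ.card := by
  by_contra hlt
  refine h (List.getD_eq_default _ _ ?_)
  rw [List.length_reverse, Multiset.length_sort]
  omega

lemma nthPart_ne_zero {μ : Multiset ℕ} (h0 : ∀ x ∈ μ, 0 < x) {i : ℕ} (h : i < μ.card) :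
    nthPart μ i ≠ 0 := by
  have h' : i < ((μ.sort (· ≤ ·)).reverse).length := by
    rw [List.length_reverse, Multiset.length_sort]; exact h
  unfold nthPart
  rw [List.getD_eq_getElem _ _ h']
  have := List.getElem_mem h'
  rw [List.mem_reverse, Multiset.mem_sort] at this
  exact (h0 _ this).ne'

lemma mem_shapeCells {μ : Multiset ℕ} {i j : ℕ} : (i, j) ∈ shapeCells μ ↔ j < nthPart μ i := by
  simp only [shapeCells, Finset.mem_filter, Finset.mem_product, Finset.mem_range,
    and_iff_right_iff_imp]
  intro h
  have := nthPart_le_sum μ i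
  exact ⟨lt_card_of_nthPart (by omega), by omega⟩

lemma nthPart_injective {n : ℕ} {p q : Nat.Partition n}
    (h : ∀ i, nthPart p.parts i = nthPart q.parts i) : p = q := by
  have hp : ∀ x ∈ p.parts, 0 < x := fun x hx => p.parts_pos hx
  have hq : ∀ x ∈ q.parts, 0 < x := fun x hx => q.parts_pos hx
  have hcard : p.parts.card = q.parts.card := by
    rcases lt_trichotomy p.parts.card q.parts.card with hlt | heq | hlt
    · exact absurd (lt_card_of_nthPart (by rw [h]; exact nthPart_ne_zero hq hlt)) (lt_irrefl _)
    · exact heq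
    · exact absurd (lt_card_of_nthPart (by rw [← h]; exact nthPart_ne_zero hp hlt)) (lt_irrefl _)
  have hlist : (p.parts.sort (· ≤ ·)).reverse = (q.parts.sort (· ≤ ·)).reverse := by
    apply List.ext_getElem
    · simp [hcard]
    · intro i h1 h2
      have := h i
      unfold nthPart at this
      rwa [List.getD_eq_getElem _ _ h1, List.getD_eq_getElem _ _ h2] at this
  ext1
  rw [← p.parts.sort_eq (· ≤ ·), ← q.parts.sort_eq (· ≤ ·), List.reverse_injective hlist]

/-- The content of a lattice word is a partition. -/
lemma exists_partition {n : ℕ} {c w : ℕ → ℕ} (hw : IsLat n c w) :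
    ∃ p : Nat.Partition n, ∀ i, nthPart p.parts i = c i := by
  have hanti : Antitone c := antitone_nat_of_succ_le fun i => by
    rw [← hw.content, ← hw.content]
    exact hw.lat n le_rfl (i + 1) (by omega)
  have hcount : ∀ k < n, c (w k - 1) ≠ 0 := by
    intro k hk
    have h1 := hw.pos k hk
    rw [← hw.content, show w k - 1 + 1 = w k by omega, cnt, Nat.count_eq_card_filter_range]
    exact Finset.card_ne_zero_of_mem (a := k) (by simp [hk])
  have hex : ∃ K, c K = 0 := by
    refine ⟨(Finset.range n).sup w, ?_⟩
    rw [← hw.content, cnt, Nat.count_eq_card_filter_range, Finset.card_eq_zero,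
      Finset.filter_eq_empty_iff]
    intro k hk h
    have := Finset.le_sup (f := w) hk
    omega
  obtain ⟨K, hK, hKmin⟩ : ∃ K, c K = 0 ∧ ∀ i < K, c i ≠ 0 :=
    ⟨Nat.find hex, Nat.find_spec hex, fun i hi => Nat.find_min hex hi⟩
  have hsum : ∑ i ∈ Finset.range K, c i = n := by
    have h1 : ∀ k ∈ Finset.range n, w k - 1 ∈ Finset.range K := by
      intro k hk
      rw [Finset.mem_range] at hk ⊢
      by_contra hge
      have h2 := hanti (show K ≤ w k - 1 by omega)
      have h3 := hcount k hk
      omega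
    have h2 := Finset.card_eq_sum_card_fiberwise (f := fun k => w k - 1) (s := Finset.range n)
      (t := Finset.range K) h1
    rw [Finset.card_range] at h2
    rw [h2]
    refine Finset.sum_congr rfl fun i _ => ?_
    rw [← hw.content, cnt, Nat.count_eq_card_filter_range]
    congr 1
    refine Finset.filter_congr fun k hk => ?_
    have := hw.pos k (Finset.mem_range.1 hk)
    omega
  let L : List ℕ := (List.range K).map c
  have hLsort : (L : Multiset ℕ).sort (· ≤ ·) = L.reverse := by
    have h1 : L.reverse.Pairwise (· ≤ ·) := by
      rw [List.pairwise_reverse, List.pairwise_map]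
      exact List.pairwise_lt_range.imp fun h => hanti h.le
    rw [← Multiset.coe_reverse, Multiset.coe_sort]
    exact List.mergeSort_of_pairwise (by simpa using h1)
  refine ⟨⟨(L : Multiset ℕ), ?_, ?_⟩, fun i => ?_⟩
  · intro x hx
    simp only [L, Multiset.mem_coe, List.mem_map, List.mem_range] at hx
    obtain ⟨i, hi, rfl⟩ := hx
    exact Nat.pos_of_ne_zero (hKmin i hi)
  · exact hsum
  · simp only [nthPart]
    rw [hLsort, List.reverse_reverse]
    by_cases hi : i < K
    · rw [List.getD_eq_getElem _ _ (by simpa [L] using hi)]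
      simp [L]
    · rw [List.getD_eq_default _ _ (by simpa [L] using hi)]
      have := hanti (show K ≤ i by omega)
      omega

/-! ### Standard Young tableaux and lattice words -/

lemma exists_of_lt_cnt {w : ℕ → ℕ} {r j m : ℕ} (h : j < cnt w r m) :
    ∃ k < m, w k = r ∧ cnt w r k = j := by
  induction m with
  | zero => simp at h
  | succ m ih =>
    by_cases h1 : j < cnt w r m
    · obtain ⟨k, hk, h2⟩ := ih h1
      exact ⟨k, by omega, h2⟩
    · rw [cnt_succ] at h
      split_ifs at h with h2
      · exact ⟨m, by omega, h2, by omega⟩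
      · omega

lemma cnt_lt_cnt {w : ℕ → ℕ} {r k m : ℕ} (hk : w k = r) (h : k < m) : cnt w r k < cnt w r m := by
  have := cnt_mono w r (show k + 1 ≤ m by omega)
  rw [cnt_succ, if_pos hk] at this
  omega

lemma lt_of_cnt_lt {w : ℕ → ℕ} {r k m : ℕ} (h : cnt w r k < cnt w r m) : k < m := by
  by_contra hle
  have := cnt_mono w r (show m ≤ k by omega)
  omega

/-- The tableaux counted by `sytCount μ`. -/
def IsTab (μ : Multiset ℕ) (T : ℕ × ℕ → ℕ) : Prop :=
  (∀ c, c ∉ shapeCells μ → T c = 0) ∧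
    Set.BijOn T (shapeCells μ : Set (ℕ × ℕ)) (Set.Icc 1 μ.sum) ∧
    (∀ i j, (i, j + 1) ∈ shapeCells μ → T (i, j) < T (i, j + 1)) ∧
    (∀ i j, (i + 1, j) ∈ shapeCells μ → T (i, j) < T (i + 1, j))

/-- The tableau of a word: row `i` lists, in increasing order, the positions (counted from `1`) of
the letter `i + 1`. -/
noncomputable def tabOf (c w : ℕ → ℕ) (p : ℕ × ℕ) : ℕ :=
  if p.2 < c p.1 then Nat.nth (fun k => w k = p.1 + 1) p.2 + 1 else 0

lemma tabOf_eq {n : ℕ} {c w : ℕ → ℕ} (hw : IsLat n c w) {k : ℕ} (hk : k < n) :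
    cnt w (w k) k < c (w k - 1) ∧ tabOf c w (w k - 1, cnt w (w k) k) = k + 1 := by
  have h1 := hw.pos k hk
  have h2 : w k - 1 + 1 = w k := by omega
  have h3 : cnt w (w k) k < c (w k - 1) := by
    rw [← hw.content, h2]
    exact cnt_lt_cnt rfl hk
  refine ⟨h3, ?_⟩
  rw [tabOf, if_pos h3, Nat.add_right_cancel_iff]
  simp only [h2]
  exact Nat.nth_count (p := fun m => w m = w k) rfl

lemma exists_tabOf {n : ℕ} {c w : ℕ → ℕ} (hw : IsLat n c w) {i j : ℕ} (h : j < c i) :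
    ∃ k < n, w k = i + 1 ∧ cnt w (i + 1) k = j ∧ tabOf c w (i, j) = k + 1 := by
  rw [← hw.content] at h
  obtain ⟨k, hk, h1, rfl⟩ := exists_of_lt_cnt h
  have := (tabOf_eq hw hk).2
  rw [h1, Nat.add_sub_cancel] at this
  exact ⟨k, hk, h1, rfl, this⟩

/-- The lattice condition on a word makes the columns of its tableau increase. -/
lemma isTab_tabOf {μ : Multiset ℕ} {w : ℕ → ℕ} (hw : IsLat μ.sum (nthPart μ) w) :
    IsTab μ (tabOf (nthPart μ) w) := by
  refine ⟨?_, ⟨?_, ?_, ?_⟩, ?_, ?_⟩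
  · rintro ⟨i, j⟩ h
    rw [mem_shapeCells] at h
    simp [tabOf, h]
  · rintro ⟨i, j⟩ h
    obtain ⟨k, hk, -, -, h1⟩ := exists_tabOf hw (mem_shapeCells.1 h)
    rw [h1, Set.mem_Icc]
    omega
  · rintro ⟨i, j⟩ h ⟨i', j'⟩ h' heq
    obtain ⟨k, hk, h1, h2, h3⟩ := exists_tabOf hw (mem_shapeCells.1 h)
    obtain ⟨k', hk', h1', h2', h3'⟩ := exists_tabOf hw (mem_shapeCells.1 h')
    obtain rfl : k = k' := by omega
    obtain rfl : i = i' := by omega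
    rw [← h2, ← h2']
  · intro m hm
    rw [Set.mem_Icc] at hm
    obtain ⟨h1, h2⟩ := tabOf_eq hw (show m - 1 < μ.sum by omega)
    exact ⟨_, mem_shapeCells.2 h1, by rw [h2]; omega⟩
  · intro i j h
    have h := mem_shapeCells.1 h
    obtain ⟨k, hk, h1, h2, h3⟩ := exists_tabOf hw (show j < nthPart μ i by omega)
    obtain ⟨k', hk', h1', h2', h3'⟩ := exists_tabOf hw h
    have := lt_of_cnt_lt (w := w) (r := i + 1) (k := k) (m := k') (by omega)
    omega
  · intro i j h
    have h := mem_shapeCells.1 h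
    obtain ⟨k, hk, h1, h2, h3⟩ := exists_tabOf hw (h.trans_le (nthPart_anti μ i))
    obtain ⟨k', hk', h1', h2', h3'⟩ := exists_tabOf hw h
    -- just after the letter at `k'` there are `j + 1` letters `i + 2`, so more than `j` letters
    -- `i + 1`
    have h4 := hw.lat (k' + 1) hk' (i + 1) (by omega)
    rw [cnt_succ w (i + 1 + 1), if_pos h1', h2'] at h4
    have h5 := lt_of_cnt_lt (w := w) (r := i + 1) (k := k) (m := k' + 1) (by omega)
    have h6 : k ≠ k' := by rintro rfl; omega
    omega

lemma IsTab.row_lt_iff {μ : Multiset ℕ} {T : ℕ × ℕ → ℕ} (hT : IsTab μ T) {i j j' : ℕ}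
    (hj : j < nthPart μ i) (hj' : j' < nthPart μ i) : T (i, j) < T (i, j') ↔ j < j' := by
  have mono : ∀ a b, a < b → b < nthPart μ i → T (i, a) < T (i, b) := by
    intro a b hab
    induction b, hab using Nat.le_induction with
    | base => exact fun h => hT.2.2.1 i a (mem_shapeCells.2 h)
    | succ b _ ih => exact fun h => (ih (by omega)).trans (hT.2.2.1 i b (mem_shapeCells.2 h))
  constructor
  · intro h
    rcases lt_trichotomy j j' with h1 | rfl | h1
    · exact h1
    · omega
    · have := mono j' j h1 hj; omega
  · exact fun h => mono j j' h hj'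

/-- Every tableau comes from the word recording the row of each entry. Its letters `i + 1` before
position `m` correspond to the entries of row `i` that are at most `m`. -/
lemma IsTab.exists_word {μ : Multiset ℕ} {T : ℕ × ℕ → ℕ} (hT : IsTab μ T) :
    ∃ w, IsLat μ.sum (nthPart μ) w ∧ tabOf (nthPart μ) w = T := by
  classical
  obtain ⟨hzero, hbij, -, hcol⟩ := id hT
  have hcell : ∀ k, ∃ p : ℕ × ℕ, k < μ.sum → p ∈ shapeCells μ ∧ T p = k + 1 := by
    intro k
    by_cases hk : k < μ.sum
    · obtain ⟨p, hp, h⟩ := hbij.surjOn (show k + 1 ∈ Set.Icc 1 μ.sum by rw [Set.mem_Icc]; omega)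
      exact ⟨p, fun _ => ⟨hp, h⟩⟩
    · exact ⟨(0, 0), fun h => absurd h hk⟩
  choose cell hcell using hcell
  set w : ℕ → ℕ := fun k => if k < μ.sum then (cell k).1 + 1 else 0 with hw
  have hrange : ∀ i j, j < nthPart μ i → 1 ≤ T (i, j) ∧ T (i, j) ≤ μ.sum :=
    fun i j h => Set.mem_Icc.1 (hbij.mapsTo (mem_shapeCells.2 h))
  have hwT : ∀ i j, j < nthPart μ i → w (T (i, j) - 1) = i + 1 := by
    intro i j h
    obtain ⟨h1, h2⟩ := hrange i j h
    obtain ⟨h3, h4⟩ := hcell (T (i, j) - 1) (by omega)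
    have h5 := hbij.injOn h3 (mem_shapeCells.2 h) (by omega)
    simp only [hw]
    rw [if_pos (by omega), h5]
  have hcnt : ∀ i, ∀ m ≤ μ.sum, cnt w (i + 1) m =
      ((Finset.range (nthPart μ i)).filter fun j => T (i, j) ≤ m).card := by
    intro i m hm
    rw [cnt, Nat.count_eq_card_filter_range]
    symm
    refine Finset.card_bij (fun j _ => T (i, j) - 1) ?_ ?_ ?_
    · intro j hj
      simp only [Finset.mem_filter, Finset.mem_range] at hj ⊢
      have := hrange i j hj.1
      exact ⟨by omega, hwT i j hj.1⟩
    · intro j hj j' hj' h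
      simp only [Finset.mem_filter, Finset.mem_range] at hj hj'
      have h1 := hrange i j hj.1
      have h2 := hrange i j' hj'.1
      have h3 := hbij.injOn (mem_shapeCells.2 hj.1) (mem_shapeCells.2 hj'.1) (by omega)
      exact (Prod.ext_iff.1 h3).2
    · intro k hk
      simp only [Finset.mem_filter, Finset.mem_range] at hk
      obtain ⟨h1, h2⟩ := hk
      obtain ⟨h3, h4⟩ := hcell k (by omega)
      simp only [hw] at h2
      rw [if_pos (by omega)] at h2
      have h5 : cell k = (i, (cell k).2) := by
        rw [← show (cell k).1 = i by omega]
      rw [h5] at h3 h4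
      refine ⟨(cell k).2, ?_, by omega⟩
      simp only [Finset.mem_filter, Finset.mem_range]
      exact ⟨mem_shapeCells.1 h3, by omega⟩
  have hlat : IsLat μ.sum (nthPart μ) w := by
    refine ⟨?_, ?_, ?_, ?_⟩
    · intro k hk
      simp only [hw]
      rw [if_neg (by omega)]
    · intro k hk
      simp only [hw]
      rw [if_pos hk]
      omega
    · intro m hm r hr
      obtain ⟨i, rfl⟩ := Nat.exists_eq_add_of_le' hr
      rw [hcnt (i + 1) m hm, hcnt i m hm]
      refine Finset.card_le_card fun j hj => ?_
      simp only [Finset.mem_filter, Finset.mem_range] at hj ⊢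
      have h1 := nthPart_anti μ i
      have h2 := hcol i j (mem_shapeCells.2 hj.1)
      omega
    · intro i
      rw [hcnt i _ le_rfl, Finset.filter_true_of_mem, Finset.card_range]
      intro j hj
      exact (hrange i j (Finset.mem_range.1 hj)).2
  refine ⟨w, hlat, ?_⟩
  funext ⟨i, j⟩
  by_cases h : j < nthPart μ i
  · have h1 := hrange i j h
    -- exactly `j` entries of row `i` precede the entry in column `j`
    have h2 : cnt w (i + 1) (T (i, j) - 1) = j := by
      rw [hcnt i _ (by omega)]
      conv_rhs => rw [← Finset.card_range j]
      congr 1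
      ext j'
      simp only [Finset.mem_filter, Finset.mem_range]
      constructor
      · rintro ⟨h3, h4⟩
        exact (hT.row_lt_iff h3 h).1 (by omega)
      · intro h3
        have h4 := (hT.row_lt_iff (h3.trans h) h).2 h3
        exact ⟨h3.trans h, by omega⟩
    have h3 := (tabOf_eq hlat (k := T (i, j) - 1) (by omega)).2
    rw [hwT i j h, h2, Nat.add_sub_cancel] at h3
    omega
  · rw [hzero (i, j) (fun h' => h (mem_shapeCells.1 h'))]
    simp [tabOf, h]

lemma tabOf_injOn {n : ℕ} {c : ℕ → ℕ} : Set.InjOn (tabOf c) {w | IsLat n c w} := by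
  intro w hw w' hw' h
  funext k
  by_cases hk : k < n
  · obtain ⟨h1, h2⟩ := tabOf_eq hw hk
    obtain ⟨k', hk', h3, -, h4⟩ := exists_tabOf hw' h1
    rw [h] at h2
    have hpos := hw.pos k hk
    obtain rfl : k = k' := by omega
    omega
  · rw [hw.zero k (by omega), hw'.zero k (by omega)]

lemma sytCount_eq (μ : Multiset ℕ) :
    sytCount μ = Set.ncard {w | IsLat μ.sum (nthPart μ) w} := by
  symm
  refine Set.BijOn.ncard_eq (f := tabOf (nthPart μ)) ⟨fun w hw => isTab_tabOf hw, tabOf_injOn, ?_⟩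
  intro T hT
  exact IsTab.exists_word hT

/-! ### The Robinson–Schensted correspondence -/

/-- The growth diagram of a permutation: its upper side spells a lattice word, and so does its right
side, with the same content. -/
lemma exists_perm_growth {n : ℕ} (π : Equiv.Perm (Fin n)) :
    ∃ H V, Growth n (permMarks π) H V ∧ ∃ c,
      IsLat n c (fun k => if k < n then H k n else 0) ∧
      IsLat n c (fun k => if k < n then V n k else 0) := by
  obtain ⟨H, V, g, hH, hV⟩ := exists_growth n (permMarks π) (permMarks_row π) (permMarks_col π)
  have eH : ∀ m ≤ n, ∀ r, cnt (fun k => if k < n then H k n else 0) r m =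
      cnt (fun k => H k n) r m :=
    fun m hm r => cnt_congr (fun k hk => if_pos hk) r hm
  have eV : ∀ m ≤ n, ∀ r, cnt (fun k => if k < n then V n k else 0) r m = cnt (V n) r m :=
    fun m hm r => cnt_congr (fun k hk => if_pos hk) r hm
  refine ⟨H, V, g, fun r => cnt (V n) (r + 1) n, ⟨?_, ?_, ?_, ?_⟩, ⟨?_, ?_, ?_, ?_⟩⟩
  · intro k hk; exact if_neg (by omega)
  · intro k hk
    rw [if_pos hk, hH]
    exact ⟨π ⟨k, hk⟩, (π _).2, hk, rfl⟩
  · intro m hm r hr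
    rw [eH m hm, eH m hm]
    have := (g.isShape m hm n le_rfl r hr).2
    simpa [nodeShape] using this
  · intro r
    rw [eH n le_rfl, g.cnt_eq (by omega) n le_rfl n le_rfl]
  · intro k hk; exact if_neg (by omega)
  · intro k hk
    rw [if_pos hk, hV]
    refine ⟨π.symm ⟨k, hk⟩, (π.symm _).2, (π.symm _).2, ?_⟩
    simp
  · intro m hm r hr
    rw [eV m hm, eV m hm, ← g.cnt_eq hr n le_rfl m hm, ← g.cnt_eq (by omega) n le_rfl m hm]
    have := (g.isShape n le_rfl m hm r hr).2
    simpa [nodeShape] using this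
  · intro r
    rw [eV n le_rfl]

/-- The Robinson–Schensted shape, together with Schensted's theorem on its first row. -/
lemma exists_shape (n : ℕ) : ∃ shape : Equiv.Perm (Fin n) → Nat.Partition n,
    (∀ π, permLIS n π = nthPart (shape π).parts 0) ∧
    ∀ p, Set.ncard {π | shape π = p} = sytCount p.parts ^ 2 := by
  choose H V g c hlatH hlatV using fun π : Equiv.Perm (Fin n) => exists_perm_growth π
  choose shape hshape using fun π => exists_partition (hlatV π)
  refine ⟨shape, fun π => ?_, fun p => ?_⟩
  · rw [hshape, (g π).permLIS_eq, ← (hlatV π).content 0]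
    exact (cnt_congr (fun k hk => if_pos hk) 1 le_rfl).symm
  · have hc : ∀ π, c π = nthPart (shape π).parts := fun π => funext fun i => (hshape π i).symm
    rw [sytCount_eq, p.parts_sum, sq, ← Set.ncard_prod]
    refine Set.BijOn.ncard_eq (f := fun π => (fun k => if k < n then H π k n else 0,
      fun k => if k < n then V π n k else 0)) ⟨?_, ?_, ?_⟩
    · rintro π rfl
      have h1 := hlatH π
      have h2 := hlatV π
      rw [hc] at h1 h2
      exact ⟨h1, h2⟩
    · intro π _ π' _ heq
      obtain ⟨h1, h2⟩ := Prod.ext_iff.1 heq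
      have key := (g π).marks_unique (g π')
        (fun i hi => by simpa [hi] using congrFun h1 i)
        (fun j hj => by simpa [hj] using congrFun h2 j)
      ext i
      obtain ⟨_, h3⟩ := (key i i.2 (π i) (π i).2).1 ⟨i.2, rfl⟩
      exact h3.symm
    · rintro ⟨h, v⟩ ⟨hh, hv⟩
      obtain ⟨X, H', V', g', hH', hV'⟩ := exists_growth_of_lat hh hv
      obtain ⟨π, hπ⟩ := g'.exists_perm fun i hi => by rw [hH' i hi]; exact hh.pos i hi
      have g'' : Growth n (permMarks π) H' V' := by
        refine ⟨fun i hi j hj => ?_, g'.H0, g'.V0⟩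
        rw [← propext (hπ i hi j hj)]
        exact g'.loc i hi j hj
      obtain ⟨eH, eV⟩ := (g π).unique g''
      have e1 : (fun k => if k < n then H π k n else 0) = h := by
        funext k
        split_ifs with hk
        · rw [eH k hk n le_rfl, hH' k hk]
        · exact (hh.zero k (by omega)).symm
      have e2 : (fun k => if k < n then V π n k else 0) = v := by
        funext k
        split_ifs with hk
        · rw [eV n le_rfl k hk, hV' k hk]
        · exact (hv.zero k (by omega)).symm
      refine ⟨π, nthPart_injective fun i => ?_, Prod.ext e1 e2⟩
      rw [hshape, ← (hlatV π).content i, e2]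
      exact hv.content i

theorem stmt1 (n ℓ : ℕ) (hn : 1 ≤ n) :
    (Set.ncard {π : Equiv.Perm (Fin n) | permLIS n π ≤ ℓ}
      = ∑ lam ∈ Finset.univ.filter (fun lam : Nat.Partition n => nthPart lam.parts 0 ≤ ℓ),
          (sytCount lam.parts) ^ 2)
    ∧ (∑ lam : Nat.Partition n, (sytCount lam.parts) ^ 2 = n.factorial) := by
  classical
  obtain ⟨shape, hLIS, hcard⟩ := exists_shape n
  have hfib : ∀ p, (Finset.univ.filter fun π => shape π = p).card = sytCount p.parts ^ 2 := by
    intro p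
    rw [← hcard, ← Set.ncard_coe_finset]
    simp
  constructor
  · have h1 : {π : Equiv.Perm (Fin n) | permLIS n π ≤ ℓ} =
        ((Finset.univ.filter fun π => nthPart (shape π).parts 0 ≤ ℓ : Finset _) : Set _) := by
      ext π
      simp [hLIS]
    rw [h1, Set.ncard_coe_finset, Finset.card_eq_sum_card_fiberwise (f := shape)
      (t := Finset.univ.filter fun lam : Nat.Partition n => nthPart lam.parts 0 ≤ ℓ)]
    · refine Finset.sum_congr rfl fun p hp => ?_
      rw [← hfib, Finset.filter_filter]
      congr 1
      ext π
      simp only [Finset.mem_filter, Finset.mem_univ, true_and] at hp ⊢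
      constructor
      · exact fun h => h.2
      · rintro rfl
        exact ⟨hp, rfl⟩
    · intro π hπ
      simpa using hπ
  · rw [Finset.sum_congr rfl fun p _ => (hfib p).symm,
      ← Finset.card_eq_sum_card_fiberwise (f := shape) (fun π _ => Finset.mem_univ _),
      Finset.card_univ, Fintype.card_perm, Fintype.card_fin]
end

section
/- For every partition λ of n (n ≥ 0), Σ_μ f^μ = (n+1)·f^λ, where the sum runs over all partitions μ of n+1 whose Young diagram is obtained from that of λ by adding a single box (i.e. μ ⊇ λ and |μ| = |λ| + 1). -/
/-!
The identity is the basic fact that Young's lattice is a differential poset. Write `f Y` for the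
number of standard Young tableaux of shape `Y`. Two facts are used.

* Branching (`ncard_syt_succ`): deleting the maximal entry of a tableau of shape `Z`, which sits in
  a corner, gives `f Z = ∑ f Y` over the diagrams `Y` covered by `Z`.
* Commutation `D U = U D + 1` of the down and up operators (`card_common`): two distinct diagrams
  of the same size have as many common upper covers as common lower covers, since these can only be
  the union and the intersection and `|Y ∪ Z| + |Y ∩ Z| = |Y| + |Z|`; and a nonempty diagram has one
  more upper cover than lower covers, since a row below the top one accepts a new cell exactly when
  the row above it can lose one.

Branching turns `∑ f X` over the upper covers `X` of `Y` into a double sum over `X` and the lower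
covers `Z` of `X`. By commutation this equals `f Y` plus the sum, over the lower covers `W` of `Y`
and the upper covers `Z` of `W`, of `f Z`. By induction the inner sums are `n * f W`, and branching
once more gives `f Y + n * f Y` (`sum_upper`).
-/


open scoped BigOperators Classical

namespace YDBranch

open YoungDiagram

/-! ### Partitions as Young diagrams -/

/-- The parts of a partition, listed in weakly decreasing order. -/
noncomputable def word {n : ℕ} (p : Nat.Partition n) : List ℕ :=
  (p.parts.sort (· ≤ ·)).reverse

lemma word_sorted {n : ℕ} (p : Nat.Partition n) : (word p).SortedGE := by
  have h := (Multiset.pairwise_sort p.parts (· ≤ ·)).sortedLE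
  exact h.reverse

lemma coe_word {n : ℕ} (p : Nat.Partition n) : ((word p : List ℕ) : Multiset ℕ) = p.parts := by
  simp [word]

lemma word_pos {n : ℕ} (p : Nat.Partition n) : ∀ x ∈ word p, 0 < x := by
  intro x hx
  apply p.parts_pos
  rw [← coe_word p]
  exact hx

/-- The Young diagram of a partition. -/
noncomputable def diag {n : ℕ} (p : Nat.Partition n) : YoungDiagram :=
  ofRowLens (word p) (word_sorted p)

lemma mem_diag {n : ℕ} (p : Nat.Partition n) (i j : ℕ) :
    (i, j) ∈ diag p ↔ j < nthPart p.parts i := by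
  rw [diag, mem_ofRowLens, nthPart]
  change _ ↔ j < (word p).getD i 0
  by_cases h : i < (word p).length
  · simp [h]
  · simp [h]

lemma shapeCells_eq {n : ℕ} (p : Nat.Partition n) : shapeCells p.parts = (diag p).cells := by
  ext ⟨i, j⟩
  rw [shapeCells, Finset.mem_filter, mem_cells, mem_diag]
  refine ⟨fun h => h.2, fun h => ⟨?_, h⟩⟩
  have h' := (mem_diag p i j).2 h
  rw [diag, mem_ofRowLens] at h'
  obtain ⟨h1, h2⟩ := h'
  have hl : (word p).length = p.parts.card := by rw [← coe_word p, Multiset.coe_card]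
  have hs : (word p).sum = p.parts.sum := by rw [← coe_word p, Multiset.sum_coe]
  have := List.le_sum_of_mem (List.getElem_mem h1)
  simp only [Finset.mem_product, Finset.mem_range]
  simp only at h1 h2 this
  omega

lemma diag_le_iff {m n : ℕ} (p : Nat.Partition m) (q : Nat.Partition n) :
    diag p ≤ diag q ↔ ∀ i, nthPart p.parts i ≤ nthPart q.parts i := by
  constructor
  · intro h i
    by_contra hc
    have h1 : (i, nthPart q.parts i) ∈ diag p := (mem_diag _ _ _).2 (by omega)
    have h2 := (mem_diag _ _ _).1 (h h1)
    omega
  · rintro h ⟨i, j⟩ hx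
    exact (mem_diag _ _ _).2 (((mem_diag _ _ _).1 hx).trans_le (h i))

lemma diag_injective (n : ℕ) : Function.Injective (diag : Nat.Partition n → YoungDiagram) := by
  intro p q h
  have h2 := congrArg rowLens h
  rw [diag, diag, rowLens_ofRowLens_eq_self (word_pos p),
    rowLens_ofRowLens_eq_self (word_pos q)] at h2
  apply Nat.Partition.ext
  rw [← coe_word p, ← coe_word q, h2]

lemma sum_rowLens (Y : YoungDiagram) : Y.rowLens.sum = Y.card := by
  have h : ∀ c ∈ Y.cells, c.1 ∈ Finset.range (Y.colLen 0) := by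
    rintro ⟨i, j⟩ hc
    rw [Finset.mem_range, ← mem_iff_lt_colLen]
    exact Y.up_left_mem le_rfl (Nat.zero_le _) hc
  rw [YoungDiagram.card, Finset.card_eq_sum_card_fiberwise h, rowLens]
  have hr : Y.rowLen = fun i => (Y.row i).card := funext fun i => Y.rowLen_eq_card
  rw [hr]
  rfl

lemma word_of_coe {n : ℕ} (p : Nat.Partition n) (l : List ℕ) (hl : l.SortedGE)
    (h : p.parts = l) : word p = l := by
  apply List.Perm.eq_of_sortedGE (word_sorted p) hl
  rw [← Multiset.coe_eq_coe, coe_word, h]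

lemma card_diag {n : ℕ} (p : Nat.Partition n) : (diag p).card = n := by
  rw [← sum_rowLens, diag, rowLens_ofRowLens_eq_self (word_pos p), ← Multiset.sum_coe, coe_word,
    p.parts_sum]

lemma exists_diag_eq (Y : YoungDiagram) : ∃ p : Nat.Partition Y.card, diag p = Y := by
  refine ⟨⟨Y.rowLens, fun {i} hi => Y.pos_of_mem_rowLens i hi, by
    rw [Multiset.sum_coe, sum_rowLens]⟩, ?_⟩
  have := word_of_coe ⟨Y.rowLens, fun {i} hi => Y.pos_of_mem_rowLens i hi, by
    rw [Multiset.sum_coe, sum_rowLens]⟩ Y.rowLens Y.rowLens_sorted rfl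
  conv_rhs => rw [← ofRowLens_to_rowLens_eq_self (μ := Y)]
  simp only [diag, this]

/-- The rank-`n` level of Young's lattice: the finite set of Young diagrams with `n` cells. -/
noncomputable def level (n : ℕ) : Finset YoungDiagram :=
  Finset.univ.image (diag : Nat.Partition n → YoungDiagram)

lemma mem_level {n : ℕ} {Y : YoungDiagram} : Y ∈ level n ↔ Y.card = n := by
  simp only [level, Finset.mem_image, Finset.mem_univ, true_and]
  constructor
  · rintro ⟨p, rfl⟩
    exact card_diag p
  · rintro rfl
    exact exists_diag_eq Y

/-! ### The branching rule for standard tableaux -/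

/-- The standard Young tableaux of shape `Y`, extended by `0` outside `Y`. -/
def syt (Y : YoungDiagram) : Set (ℕ × ℕ → ℕ) :=
  {T | (∀ c, c ∉ Y → T c = 0) ∧
    Set.BijOn T (Y : Set (ℕ × ℕ)) (Set.Icc 1 Y.card) ∧
    (∀ i j, (i, j + 1) ∈ Y → T (i, j) < T (i, j + 1)) ∧
    (∀ i j, (i + 1, j) ∈ Y → T (i, j) < T (i + 1, j))}

lemma sytCount_eq {n : ℕ} (p : Nat.Partition n) : sytCount p.parts = (syt (diag p)).ncard := by
  simp only [sytCount, shapeCells_eq, p.parts_sum, syt, card_diag]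
  rfl

lemma syt_finite (Y : YoungDiagram) : (syt Y).Finite := by
  have hb : ∀ T ∈ syt Y, ∀ c, T c < Y.card + 1 := by
    rintro T ⟨h0, hT, -, -⟩ c
    by_cases hc : c ∈ Y
    · exact Nat.lt_succ_of_le (hT.mapsTo hc).2
    · simp [h0 c hc]
  refine Finite.of_injective
    (fun (T : syt Y) (c : Y.cells) => (⟨T.1 c, hb T.1 T.2 c⟩ : Fin (Y.card + 1))) ?_
  rintro ⟨T, hT⟩ ⟨T', hT'⟩ h
  apply Subtype.ext
  funext c
  by_cases hc : c ∈ Y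
  · simpa using congrFun h ⟨c, hc⟩
  · exact (hT.1 c hc).trans (hT'.1 c hc).symm

/-- A cover in Young's lattice adds exactly one cell. -/
lemma exists_cell {Y Z : YoungDiagram} (h : Y ≤ Z) (hc : Z.card = Y.card + 1) :
    ∃ c, c ∉ Y ∧ ∀ x, x ∈ Z ↔ x = c ∨ x ∈ Y := by
  have hs : Y.cells ⊆ Z.cells := h
  have h1 : (Z.cells \ Y.cells).card = 1 := by
    rw [Finset.card_sdiff_of_subset hs]
    change Z.card - Y.card = 1
    omega
  obtain ⟨c, hc⟩ := Finset.card_eq_one.1 h1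
  have key : ∀ x, (x ∈ Z ∧ x ∉ Y) ↔ x = c := fun x => by
    have := Finset.ext_iff.1 hc x
    simpa using this
  refine ⟨c, ((key c).2 rfl).2, fun x => ?_⟩
  have := key x
  have h' : x ∈ Y → x ∈ Z := fun hx => h hx
  tauto

lemma card_of_cell {Y Z : YoungDiagram} {c : ℕ × ℕ} (hc : c ∉ Y)
    (h : ∀ x, x ∈ Z ↔ x = c ∨ x ∈ Y) : Z.card = Y.card + 1 := by
  have : Z.cells = insert c Y.cells := by
    ext x
    simp [h]
  rw [YoungDiagram.card, this, Finset.card_insert_of_notMem (by simpa using hc)]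

/-- Extend a filling of `Y` to the larger shape `Z` by writing `k` in the cells of `Z` outside
`Y`. -/
noncomputable def extend (k : ℕ) (Z Y : YoungDiagram) (T : ℕ × ℕ → ℕ) : ℕ × ℕ → ℕ :=
  fun x => if x ∈ Z ∧ x ∉ Y then k else T x

lemma extend_mem {Y Z : YoungDiagram} (h : Y ≤ Z) (hc : Z.card = Y.card + 1)
    {T : ℕ × ℕ → ℕ} (hT : T ∈ syt Y) : extend Z.card Z Y T ∈ syt Z := by
  obtain ⟨c, hcY, hZ⟩ := exists_cell h hc
  obtain ⟨h0, hb, hr, hd⟩ := hT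
  have hle : ∀ x, T x ≤ Y.card := fun x => by
    by_cases hx : x ∈ Y
    · exact (hb.mapsTo hx).2
    · simp [h0 x hx]
  have hec : extend Z.card Z Y T c = Z.card := by simp [extend, hZ, hcY]
  have hen : ∀ x, x ≠ c → extend Z.card Z Y T x = T x := fun x hx => by
    simp only [extend]
    rw [if_neg]
    rw [hZ]
    tauto
  generalize extend Z.card Z Y T = E at hec hen
  have hYc : ∀ x ∈ Y, x ≠ c := fun x hx hxc => hcY (hxc ▸ hx)
  refine ⟨fun x hx => ?_, ⟨fun x hx => ?_, fun x hx y hy hxy => ?_, fun k hk => ?_⟩, ?_, ?_⟩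
  · rw [hZ] at hx
    rw [hen x (by tauto), h0 x (by tauto)]
  · rcases (hZ x).1 hx with rfl | hx'
    · rw [hec]
      exact ⟨by omega, le_rfl⟩
    · rw [hen x (hYc x hx')]
      have := hb.mapsTo hx'
      exact ⟨this.1, by have := this.2; omega⟩
  · rcases (hZ x).1 hx with rfl | hx' <;> rcases (hZ y).1 hy with rfl | hy'
    · rfl
    · rw [hec, hen y (hYc y hy')] at hxy
      have := hle y
      omega
    · rw [hec, hen x (hYc x hx')] at hxy
      have := hle x
      omega
    · rw [hen x (hYc x hx'), hen y (hYc y hy')] at hxy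
      exact hb.injOn hx' hy' hxy
  · obtain ⟨hk1, hk2⟩ := hk
    by_cases hkz : k = Z.card
    · exact ⟨c, (hZ c).2 (Or.inl rfl), by rw [hec, hkz]⟩
    · obtain ⟨x, hx, hxk⟩ := hb.surjOn (show k ∈ Set.Icc 1 Y.card from ⟨hk1, by omega⟩)
      exact ⟨x, h hx, by rw [hen x (hYc x hx), hxk]⟩
  · intro i j hij
    rcases (hZ _).1 hij with hx | hx
    · rw [hx, hec, hen _ (by rw [← hx]; simp)]
      have := hle (i, j)
      omega
    · rw [hen _ (hYc _ hx), hen _ (hYc _ (Y.up_left_mem le_rfl (Nat.le_succ j) hx))]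
      exact hr i j hx
  · intro i j hij
    rcases (hZ _).1 hij with hx | hx
    · rw [hx, hec, hen _ (by rw [← hx]; simp)]
      have := hle (i, j)
      omega
    · rw [hen _ (hYc _ hx), hen _ (hYc _ (Y.up_left_mem (Nat.le_succ i) le_rfl hx))]
      exact hd i j hx

lemma extend_injOn {Y Z : YoungDiagram} (k : ℕ) :
    Set.InjOn (extend k Z Y) (syt Y) := by
  intro T hT T' hT' h
  funext x
  by_cases hx : x ∈ Y
  · simpa [extend, hx] using congrFun h x
  · rw [hT.1 x hx, hT'.1 x hx]

/-- The inner shape is recovered from an extended tableau as the set of cells whose entry is not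
the maximal one. -/
lemma mem_iff_extend {Y Z : YoungDiagram} (h : Y ≤ Z) (hc : Z.card = Y.card + 1)
    {T : ℕ × ℕ → ℕ} (hT : T ∈ syt Y) (x : ℕ × ℕ) :
    x ∈ Y ↔ x ∈ Z ∧ extend Z.card Z Y T x ≠ Z.card := by
  by_cases hx : x ∈ Y
  · have := (hT.2.1.mapsTo hx).2
    have h' : x ∈ Z := h hx
    simp only [hx, h', extend, true_and, not_true, and_false, if_false, true_iff]
    omega
  · by_cases hz : x ∈ Z <;> simp [extend, hx, hz]

/-- Every tableau with at least one cell arises by adding its maximal entry to a tableau on a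
smaller shape. -/
lemma exists_extend {Z : YoungDiagram} {n : ℕ} (hZ : Z.card = n + 1) {T : ℕ × ℕ → ℕ}
    (hT : T ∈ syt Z) :
    ∃ Y : YoungDiagram, Y.card = n ∧ Y ≤ Z ∧ T ∈ extend Z.card Z Y '' syt Y := by
  obtain ⟨h0, hb, hr, hd⟩ := hT
  have hle : ∀ x ∈ Z, T x ≤ n + 1 := fun x hx => hZ ▸ (hb.mapsTo hx).2
  obtain ⟨⟨a, b⟩, hc, hTc⟩ := hb.surjOn (show n + 1 ∈ Set.Icc 1 Z.card from ⟨by omega, by omega⟩)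
  have hc' : (a, b) ∈ Z := hc
  -- The cell of the maximal entry is a corner of the shape.
  have hright : (a, b + 1) ∉ Z := fun h => by
    have := hr a b h
    have := hle _ h
    omega
  have hdown : (a + 1, b) ∉ Z := fun h => by
    have := hd a b h
    have := hle _ h
    omega
  let Y : YoungDiagram := ⟨Z.cells.erase (a, b), by
    rintro ⟨i, j⟩ ⟨i', j'⟩ hij hm
    obtain ⟨hi, hj⟩ : i' ≤ i ∧ j' ≤ j := hij
    simp only [Finset.coe_erase, Set.mem_sdiff, Finset.mem_coe, mem_cells,
      Set.mem_singleton_iff, Prod.mk.injEq] at hm ⊢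
    refine ⟨Z.up_left_mem hi hj hm.1, ?_⟩
    rintro ⟨rfl, rfl⟩
    rcases hi.eq_or_lt with rfl | hi'
    · rcases hj.eq_or_lt with rfl | hj'
      · exact hm.2 ⟨rfl, rfl⟩
      · exact hright (Z.up_left_mem le_rfl hj' hm.1)
    · exact hdown (Z.up_left_mem hi' hj hm.1)⟩
  have hY : ∀ x, x ∈ Y ↔ x ≠ (a, b) ∧ x ∈ Z := fun x => Finset.mem_erase
  have hYc : Y.card = n := by
    have : Z.card = Y.card + 1 := card_of_cell (c := (a, b)) (by simp [hY]) (fun x => by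
      rw [hY]
      by_cases hx : x = (a, b)
      · simp [hx, hc']
      · simp [hx])
    omega
  refine ⟨Y, hYc, fun x hx => ((hY x).1 hx).2, Function.update T (a, b) 0, ?_, ?_⟩
  · have hen : ∀ x, x ≠ (a, b) → Function.update T (a, b) 0 x = T x := fun x hx =>
      Function.update_of_ne hx _ _
    have hec : Function.update T (a, b) 0 (a, b) = 0 := Function.update_self _ _ _
    generalize Function.update T (a, b) 0 = E at hen hec
    have hE : ∀ x, E x ≤ T x := fun x => by
      by_cases hx : x = (a, b)
      · rw [hx, hec]
        exact Nat.zero_le _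
      · rw [hen x hx]
    refine ⟨fun x hx => ?_, ⟨fun x hx => ?_, fun x hx y hy hxy => ?_, fun k hk => ?_⟩, ?_, ?_⟩
    · rw [hY] at hx
      by_cases hxc : x = (a, b)
      · rw [hxc, hec]
      · rw [hen x hxc, h0 x (by tauto)]
    · obtain ⟨hx1, hx2⟩ := (hY x).1 hx
      rw [hen x hx1]
      have h1 := (hb.mapsTo hx2).1
      have h2 := hle x hx2
      have h3 : T x ≠ n + 1 := fun h => hx1 (hb.injOn hx2 hc (h.trans hTc.symm))
      exact ⟨h1, by omega⟩
    · obtain ⟨hx1, hx2⟩ := (hY x).1 hx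
      obtain ⟨hy1, hy2⟩ := (hY y).1 hy
      rw [hen x hx1, hen y hy1] at hxy
      exact hb.injOn hx2 hy2 hxy
    · obtain ⟨hk1, hk2⟩ := hk
      obtain ⟨x, hx, hxk⟩ := hb.surjOn (show k ∈ Set.Icc 1 Z.card from ⟨hk1, by omega⟩)
      have hxc : x ≠ (a, b) := by
        rintro rfl
        omega
      exact ⟨x, (hY x).2 ⟨hxc, hx⟩, by rw [hen x hxc, hxk]⟩
    · intro i j hij
      obtain ⟨h1, h2⟩ := (hY _).1 hij
      rw [hen _ h1]
      exact (hE _).trans_lt (hr i j h2)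
    · intro i j hij
      obtain ⟨h1, h2⟩ := (hY _).1 hij
      rw [hen _ h1]
      exact (hE _).trans_lt (hd i j h2)
  · funext x
    by_cases hx : x = (a, b)
    · subst hx
      simp [extend, hY, hc', hTc, hZ]
    · simp only [extend, hY]
      rw [if_neg (by tauto), Function.update_of_ne hx]

/-- Branching rule: removing the maximal entry sorts the tableaux of shape `Z` by the shape of what
remains. -/
lemma ncard_syt_succ {n : ℕ} {Z : YoungDiagram} (hZ : Z ∈ level (n + 1)) :
    (syt Z).ncard = ∑ Y ∈ (level n).filter (· ≤ Z), (syt Y).ncard := by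
  rw [mem_level] at hZ
  have hun : (syt_finite Z).toFinset = ((level n).filter (· ≤ Z)).biUnion
      (fun Y => ((syt_finite Y).image (extend Z.card Z Y)).toFinset) := by
    ext T
    simp only [Set.Finite.mem_toFinset, Finset.mem_biUnion, Finset.mem_filter, mem_level]
    constructor
    · intro hT
      obtain ⟨Y, h1, h2, h3⟩ := exists_extend hZ hT
      exact ⟨Y, ⟨h1, h2⟩, h3⟩
    · rintro ⟨Y, ⟨h1, h2⟩, T', hT', rfl⟩
      exact extend_mem h2 (by omega) hT'
  rw [Set.ncard_eq_toFinset_card _ (syt_finite Z), hun, Finset.card_biUnion]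
  · refine Finset.sum_congr rfl fun Y hY => ?_
    rw [← Set.ncard_eq_toFinset_card _ ((syt_finite Y).image _), (extend_injOn _).ncard_image]
  · intro Y hY Y' hY' hne
    rw [Finset.mem_coe, Finset.mem_filter, mem_level] at hY hY'
    rw [Function.onFun, Finset.disjoint_left]
    intro T h1 h2
    rw [Set.Finite.mem_toFinset] at h1 h2
    obtain ⟨T1, hT1, rfl⟩ := h1
    obtain ⟨T2, hT2, he⟩ := h2
    apply hne
    apply SetLike.ext
    intro x
    rw [mem_iff_extend hY.2 (by omega) hT1, mem_iff_extend hY'.2 (by omega) hT2, he]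

/-! ### Upper and lower covers in Young's lattice -/

/-- A diagram with `n` cells has no cell in row `n` or below. -/
lemma lt_card_of_rowLen_pos (Y : YoungDiagram) {i : ℕ} (h : 0 < Y.rowLen i) : i < Y.card := by
  have h1 : i < Y.colLen 0 := by rwa [← mem_iff_lt_colLen, mem_iff_lt_rowLen]
  have h2 : Y.colLen 0 ≤ Y.card := by
    rw [colLen_eq_card]
    exact Finset.card_le_card (Finset.filter_subset _ _)
  omega

/-- Add a cell at the end of row `i`, where row `i` is the top row or is shorter than the row
above it. -/
def addCell (Y : YoungDiagram) (i : ℕ) (h : i = 0 ∨ Y.rowLen i < Y.rowLen (i - 1)) :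
    YoungDiagram where
  cells := insert (i, Y.rowLen i) Y.cells
  isLowerSet := by
    rintro ⟨a, b⟩ ⟨a', b'⟩ hab hm
    obtain ⟨ha, hb⟩ : a' ≤ a ∧ b' ≤ b := hab
    simp only [Finset.coe_insert, Set.mem_insert_iff, Finset.mem_coe, mem_cells,
      Prod.mk.injEq] at hm ⊢
    rcases hm with ⟨rfl, rfl⟩ | hm
    · rcases hb.eq_or_lt with rfl | hb'
      · rcases ha.eq_or_lt with rfl | ha'
        · exact Or.inl ⟨rfl, rfl⟩
        · right
          have h1 : Y.rowLen a < Y.rowLen (a - 1) := by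
            rcases h with h | h
            · omega
            · exact h
          rw [mem_iff_lt_rowLen]
          exact h1.trans_le (Y.rowLen_anti _ _ (by omega))
      · right
        rw [mem_iff_lt_rowLen]
        exact hb'.trans_le (Y.rowLen_anti _ _ ha)
    · exact Or.inr (Y.up_left_mem ha hb hm)

lemma mem_addCell {Y : YoungDiagram} {i : ℕ} {h} {x : ℕ × ℕ} :
    x ∈ addCell Y i h ↔ x = (i, Y.rowLen i) ∨ x ∈ Y := Finset.mem_insert

/-- Delete the last cell of row `i`, where row `i` is longer than the row below it. -/
def removeCell (Y : YoungDiagram) (i : ℕ) (h : Y.rowLen (i + 1) < Y.rowLen i) :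
    YoungDiagram where
  cells := Y.cells.erase (i, Y.rowLen i - 1)
  isLowerSet := by
    rintro ⟨a, b⟩ ⟨a', b'⟩ hab hm
    obtain ⟨ha, hb⟩ : a' ≤ a ∧ b' ≤ b := hab
    simp only [Finset.coe_erase, Set.mem_sdiff, Finset.mem_coe, mem_cells,
      Set.mem_singleton_iff, Prod.mk.injEq] at hm ⊢
    obtain ⟨hm, hne⟩ := hm
    refine ⟨Y.up_left_mem ha hb hm, ?_⟩
    rintro ⟨rfl, rfl⟩
    rw [mem_iff_lt_rowLen] at hm
    rcases ha.eq_or_lt with rfl | ha'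
    · omega
    · have := Y.rowLen_anti (a' + 1) a ha'
      omega

lemma mem_removeCell {Y : YoungDiagram} {i : ℕ} {h} {x : ℕ × ℕ} :
    x ∈ removeCell Y i h ↔ x ≠ (i, Y.rowLen i - 1) ∧ x ∈ Y := Finset.mem_erase

/-- The upper covers of `Y` correspond to the rows that accept a new cell. -/
lemma card_upper {n : ℕ} {Y : YoungDiagram} (hY : Y ∈ level n) :
    ((level (n + 1)).filter (Y ≤ ·)).card =
      ((Finset.range (n + 1)).filter fun i => i = 0 ∨ Y.rowLen i < Y.rowLen (i - 1)).card := by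
  rw [mem_level] at hY
  symm
  refine Finset.card_bij (fun i hi => addCell Y i (Finset.mem_filter.1 hi).2) ?_ ?_ ?_
  · intro i hi
    rw [Finset.mem_filter, mem_level]
    refine ⟨?_, fun x hx => mem_addCell.2 (Or.inr hx)⟩
    rw [card_of_cell (c := (i, Y.rowLen i)) (by simp [mem_iff_lt_rowLen])
      (fun x => mem_addCell), hY]
  · intro i hi i' hi' h
    have h1 : (i, Y.rowLen i) ∈ addCell Y i (Finset.mem_filter.1 hi).2 :=
      mem_addCell.2 (Or.inl rfl)
    rw [h, mem_addCell, mem_iff_lt_rowLen] at h1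
    rcases h1 with h1 | h1
    · exact congrArg Prod.fst h1
    · omega
  · intro Z hZ
    rw [Finset.mem_filter, mem_level] at hZ
    obtain ⟨⟨i, j⟩, hc, hZc⟩ := exists_cell hZ.2 (by omega)
    have hcZ : (i, j) ∈ Z := (hZc _).2 (Or.inl rfl)
    have hj : j = Y.rowLen i := by
      rw [mem_iff_lt_rowLen] at hc
      by_contra hne
      have h1 : (i, Y.rowLen i) ∈ Z := Z.up_left_mem le_rfl (by omega) hcZ
      rw [hZc, mem_iff_lt_rowLen, Prod.mk.injEq] at h1
      omega
    subst hj
    have hi : i = 0 ∨ Y.rowLen i < Y.rowLen (i - 1) := by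
      by_cases h0 : i = 0
      · exact Or.inl h0
      · right
        have h1 : (i - 1, Y.rowLen i) ∈ Z := Z.up_left_mem (by omega) le_rfl hcZ
        rw [hZc, mem_iff_lt_rowLen, Prod.mk.injEq] at h1
        omega
    have hin : i < n + 1 := by
      rcases hi with hi | hi
      · omega
      · have := lt_card_of_rowLen_pos Y (i := i - 1) (by omega)
        omega
    refine ⟨i, Finset.mem_filter.2 ⟨Finset.mem_range.2 hin, hi⟩, ?_⟩
    apply SetLike.ext
    intro x
    rw [mem_addCell, hZc]

/-- The lower covers of `Y` correspond to the rows that can lose a cell. -/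
lemma card_lower {m : ℕ} {Y : YoungDiagram} (hY : Y ∈ level (m + 1)) :
    ((level m).filter (· ≤ Y)).card =
      ((Finset.range (m + 1)).filter fun i => Y.rowLen (i + 1) < Y.rowLen i).card := by
  rw [mem_level] at hY
  symm
  have hlast : ∀ i, Y.rowLen (i + 1) < Y.rowLen i → (i, Y.rowLen i - 1) ∈ Y := fun i hi => by
    rw [mem_iff_lt_rowLen]
    omega
  refine Finset.card_bij (fun i hi => removeCell Y i (Finset.mem_filter.1 hi).2) ?_ ?_ ?_
  · intro i hi
    rw [Finset.mem_filter, mem_level]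
    refine ⟨?_, fun x hx => (mem_removeCell.1 hx).2⟩
    have hi' := hlast i (Finset.mem_filter.1 hi).2
    have := card_of_cell (Y := removeCell Y i (Finset.mem_filter.1 hi).2) (Z := Y)
      (c := (i, Y.rowLen i - 1)) (by simp [mem_removeCell]) (fun x => by
        rw [mem_removeCell]
        by_cases hx : x = (i, Y.rowLen i - 1)
        · simp [hx, hi']
        · simp [hx])
    omega
  · intro i hi i' hi' h
    by_contra hne
    have h1 : (i, Y.rowLen i - 1) ∈ removeCell Y i' (Finset.mem_filter.1 hi').2 :=
      mem_removeCell.2 ⟨fun he => hne (congrArg Prod.fst he), hlast i (Finset.mem_filter.1 hi).2⟩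
    rw [← h, mem_removeCell] at h1
    exact h1.1 rfl
  · intro Z hZ
    rw [Finset.mem_filter, mem_level] at hZ
    obtain ⟨⟨i, j⟩, hc, hZc⟩ := exists_cell hZ.2 (by omega)
    have hcY : (i, j) ∈ Y := (hZc _).2 (Or.inl rfl)
    have hjl := mem_iff_lt_rowLen.1 hcY
    have hj : j = Y.rowLen i - 1 := by
      by_contra hne
      have h1 : (i, Y.rowLen i - 1) ∈ Y := by
        rw [mem_iff_lt_rowLen]
        omega
      rw [hZc, Prod.mk.injEq] at h1
      rcases h1 with h1 | h1
      · omega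
      · exact hc (Z.up_left_mem le_rfl (by omega) h1)
    have hi : Y.rowLen (i + 1) < Y.rowLen i := by
      by_contra hle
      have h1 : (i + 1, j) ∈ Y := by
        rw [mem_iff_lt_rowLen]
        omega
      rw [hZc, Prod.mk.injEq] at h1
      rcases h1 with h1 | h1
      · omega
      · exact hc (Z.up_left_mem (Nat.le_succ i) le_rfl h1)
    have hin : i < m + 1 := by
      have := lt_card_of_rowLen_pos Y (i := i) (by omega)
      omega
    refine ⟨i, Finset.mem_filter.2 ⟨Finset.mem_range.2 hin, hi⟩, ?_⟩
    apply SetLike.ext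
    intro x
    rw [mem_removeCell, ← hj, hZc]
    by_cases hx : x = (i, j)
    · simp [hx, hc]
    · simp [hx]

/-- A row other than the top one accepts a new cell exactly when the row above it can lose one, so
a nonempty diagram has one more upper cover than lower covers. -/
lemma card_upper_eq {m : ℕ} {Y : YoungDiagram} (hY : Y ∈ level (m + 1)) :
    ((level (m + 2)).filter (Y ≤ ·)).card = ((level m).filter (· ≤ Y)).card + 1 := by
  rw [card_upper hY, card_lower hY, Finset.card_filter, Finset.sum_range_succ',
    ← Finset.card_filter]
  simp

lemma card_upper_zero {Y : YoungDiagram} (hY : Y ∈ level 0) :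
    ((level 1).filter (Y ≤ ·)).card = 1 := by
  rw [card_upper hY]
  simp [Finset.filter_singleton]

lemma card_sup_add_card_inf (Y Z : YoungDiagram) :
    (Y ⊔ Z).card + (Y ⊓ Z).card = Y.card + Z.card := by
  simp only [YoungDiagram.card, cells_sup, cells_inf]
  exact Finset.card_union_add_card_inter _ _

lemma card_le_card' {Y Z : YoungDiagram} (h : Y ≤ Z) : Y.card ≤ Z.card :=
  Finset.card_le_card h

lemma eq_of_le_of_card {Y Z : YoungDiagram} (h : Y ≤ Z) (hc : Z.card ≤ Y.card) : Y = Z := by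
  ext1
  exact Finset.eq_of_subset_of_card_le h hc

/-- Two distinct diagrams of the same rank have at most one common upper cover, their join, and at
most one common lower cover, their meet; by modularity of the rank one exists iff the other
does. -/
lemma card_common_of_ne {m : ℕ} {Y Z : YoungDiagram} (hY : Y ∈ level (m + 1))
    (hZ : Z ∈ level (m + 1)) (hne : Z ≠ Y) :
    ((level (m + 2)).filter fun X => Y ≤ X ∧ Z ≤ X).card =
      ((level m).filter fun X => X ≤ Y ∧ X ≤ Z).card := by
  rw [mem_level] at hY hZ
  have hmod := card_sup_add_card_inf Y Z
  have hsup : m + 2 ≤ (Y ⊔ Z).card := by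
    by_contra hlt
    have h1 := eq_of_le_of_card (le_sup_left : Y ≤ Y ⊔ Z) (by omega)
    have h2 := eq_of_le_of_card (le_sup_right : Z ≤ Y ⊔ Z) (by omega)
    exact hne (h2.trans h1.symm)
  by_cases h : (Y ⊔ Z).card = m + 2
  · have e1 : ((level (m + 2)).filter fun X => Y ≤ X ∧ Z ≤ X) = {Y ⊔ Z} := by
      ext X
      rw [Finset.mem_filter, mem_level, Finset.mem_singleton]
      constructor
      · rintro ⟨h1, h2, h3⟩
        exact (eq_of_le_of_card (sup_le h2 h3) (by omega)).symm
      · rintro rfl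
        exact ⟨h, le_sup_left, le_sup_right⟩
    have e2 : ((level m).filter fun X => X ≤ Y ∧ X ≤ Z) = {Y ⊓ Z} := by
      ext X
      rw [Finset.mem_filter, mem_level, Finset.mem_singleton]
      constructor
      · rintro ⟨h1, h2, h3⟩
        exact eq_of_le_of_card (le_inf h2 h3) (by omega)
      · rintro rfl
        exact ⟨by omega, inf_le_left, inf_le_right⟩
    rw [e1, e2, Finset.card_singleton, Finset.card_singleton]
  · have e1 : ((level (m + 2)).filter fun X => Y ≤ X ∧ Z ≤ X) = ∅ := by
      refine Finset.filter_eq_empty_iff.2 fun X hX => ?_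
      rintro ⟨h2, h3⟩
      rw [mem_level] at hX
      have := card_le_card' (sup_le h2 h3)
      omega
    have e2 : ((level m).filter fun X => X ≤ Y ∧ X ≤ Z) = ∅ := by
      refine Finset.filter_eq_empty_iff.2 fun X hX => ?_
      rintro ⟨h2, h3⟩
      rw [mem_level] at hX
      have := card_le_card' (le_inf h2 h3)
      omega
    rw [e1, e2]

/-- The commutation relation `D U = U D + 1` of the up and down operators on Young's lattice, in
matrix entries. -/
lemma card_common {m : ℕ} {Y Z : YoungDiagram} (hY : Y ∈ level (m + 1))
    (hZ : Z ∈ level (m + 1)) :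
    ((level (m + 2)).filter fun X => Y ≤ X ∧ Z ≤ X).card =
      ((level m).filter fun X => X ≤ Y ∧ X ≤ Z).card + if Z = Y then 1 else 0 := by
  by_cases h : Z = Y
  · subst h
    simpa using card_upper_eq hZ
  · rw [card_common_of_ne hY hZ h, if_neg h, add_zero]

/-! ### The summation formula -/

lemma sum_swap (s t : Finset YoungDiagram) (p : YoungDiagram → Prop)
    (r : YoungDiagram → YoungDiagram → Prop) (f : YoungDiagram → ℕ) :
    ∑ X ∈ s.filter p, ∑ Z ∈ t.filter (r X), f Z =
      ∑ Z ∈ t, (s.filter fun X => p X ∧ r X Z).card * f Z := by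
  simp only [Finset.sum_filter, Finset.card_filter, Finset.sum_mul]
  rw [Finset.sum_comm' (s := t) (t := fun _ => s) (t' := s) (s' := fun _ => t) (by tauto)]
  refine Finset.sum_congr rfl fun X _ => ?_
  by_cases hp : p X <;> simp [hp]

/-- The sum over the upper covers `X` of `Y` is expanded by the branching rule into a sum over
lower covers `Z` of `X`; the commutation relation turns it into the same sum with the order of the
steps exchanged, plus the diagonal term `Z = Y`. -/
lemma sum_upper (n : ℕ) : ∀ Y ∈ level n,
    ∑ X ∈ (level (n + 1)).filter (Y ≤ ·), (syt X).ncard = (n + 1) * (syt Y).ncard := by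
  have key : ∀ (n : ℕ) (Y : YoungDiagram),
      ∑ X ∈ (level (n + 1)).filter (Y ≤ ·), (syt X).ncard =
        ∑ Z ∈ level n, ((level (n + 1)).filter fun X => Y ≤ X ∧ Z ≤ X).card * (syt Z).ncard := by
    intro n Y
    rw [← sum_swap (level (n + 1)) (level n) (Y ≤ ·) (fun X Z => Z ≤ X)]
    exact Finset.sum_congr rfl fun X hX => ncard_syt_succ (Finset.mem_filter.1 hX).1
  induction n with
  | zero =>
    intro Y hY
    rw [key]
    have huniq : ∀ Z ∈ level 0, Z = Y := fun Z hZ => by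
      rw [mem_level] at hY hZ
      ext1
      rw [Finset.card_eq_zero.1 hY, Finset.card_eq_zero.1 hZ]
    have h0 : level 0 = {Y} := by
      ext Z
      rw [Finset.mem_singleton]
      exact ⟨huniq Z, fun h => h ▸ hY⟩
    rw [h0, Finset.sum_singleton]
    simp only [and_self]
    rw [zero_add, card_upper_zero hY]
  | succ m ih =>
    intro Y hY
    rw [key, Finset.sum_congr rfl fun Z hZ => by rw [card_common hY hZ, add_mul],
      Finset.sum_add_distrib, ← sum_swap (level m) (level (m + 1)) (· ≤ Y) (fun X Z => X ≤ Z),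
      Finset.sum_congr rfl fun X hX => ih X (Finset.mem_filter.1 hX).1, ← Finset.mul_sum,
      ← ncard_syt_succ hY]
    simp only [ite_mul, one_mul, zero_mul, Finset.sum_ite_eq', hY, if_true]
    ring

end YDBranch

theorem stmt2 (n : ℕ) (lam : Nat.Partition n) :
    ∑ μ ∈ Finset.univ.filter
        (fun μ : Nat.Partition (n + 1) => ∀ i, nthPart lam.parts i ≤ nthPart μ.parts i),
      sytCount μ.parts
    = (n + 1) * sytCount lam.parts := by
  rw [YDBranch.sytCount_eq, ← YDBranch.sum_upper n _ (YDBranch.mem_level.2 (YDBranch.card_diag lam)),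
    YDBranch.level, Finset.filter_image, Finset.sum_image ((YDBranch.diag_injective _).injOn)]
  simp only [YDBranch.sytCount_eq, YDBranch.diag_le_iff]
end
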